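/- (MAPF on Grids under Maximum Agent Density, Upper Bound.) Let m1 ≥ m2 ≥ 3 and consider the m1×m2 grid graph with n = m1·m2 agents, where the start map s : Fin n → V and the goal map g : Fin n → V are both bijections (every grid vertex is occupied by exactly one agent at the start and at the goal). Then there exists a feasible path set with makespan at most 4·m1 + 8·m2. -/

import Mathlib

/-!
Every vertex is occupied, so a joint plan is a sequence of permutations of the grid, each of which
moves every agent by at most one edge and contains no 2-cycle: agents circulate along cycles. The
theorem says that every permutation of the grid is a product of `4 * m1 + 8 * m2` such simultaneous
moves.

Three local facts, verified by computation on small blocks, supply the constants. On a `2 × k`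
ladder with `3 ≤ k ≤ 6`, any `k` agents can be collected on one side in three moves
(`ladder_split`); on a `2 × k` ladder with `3 ≤ k ≤ 5`, any set of rungs can have its two agents
exchanged in seven moves (`ladder_swap`); on a `4 × h` block with `h = 2, 3`, any set of rows can
have its two middle agents exchanged in three moves (`middle_swap`).

Odd-even transposition sort on a path of `m` nodes finishes after `m` rounds, also when each node
holds `k` agents and comparisons are replaced by merge-splits (`odd_even_sort`). Performed with
`ladder_split`, simultaneously in all groups of three to six parallel lines, it sends agents to
prescribed positions along the lines in `3 * m` moves, provided that they may be permuted freely
between the lines of a group (`group_sort`). Performed with `ladder_swap`, it realises any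
permutation preserving every line of length `m` in `7 * m` moves (`line_sort`).

If `m2 ≤ 6`, the rows form a single group: all agents are brought to their columns in `3 * m1` moves
and the columns are then sorted in `7 * m2` moves (`route_narrow`). If `m2 ≥ 7`, cut both the columns
and the rows into groups of three or four. By König's edge colouring theorem
(`exists_edge_coloring`) the agents of each column can be given distinct rows in such a way that each
row is given exactly one agent bound for each column. Group sorts bring every agent to its assigned
row, then to its target column, then to its target row, the other coordinate being preserved up to
its group each time; this takes `3 * m2 + 3 * m1 + 3 * m2` moves. Now every agent is in its target row and
in the strip of three or four columns containing its target, so that `21` further moves suffice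
(`strips_sort`). The total `3 * m1 + 6 * m2 + 21` is at most `4 * m1 + 8 * m2` (`route_wide`).
-/

/-- Two vertices of the `m1 × m2` grid graph are adjacent iff their Manhattan
distance equals `1`. -/
def GridAdj {m1 m2 : ℕ} (u v : Fin m1 × Fin m2) : Prop :=
  (((u.1 : ℕ) : ℤ) - ((v.1 : ℕ) : ℤ)).natAbs + (((u.2 : ℕ) : ℤ) - ((v.2 : ℕ) : ℤ)).natAbs = 1

/-- A feasible path set for the MAPF instance `(s, g)` on the `m1 × m2` grid:
each agent's path starts at its start vertex, moves along grid edges or waits,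
eventually stays at its goal, and no two agents ever collide on a vertex or
swap along an edge. -/
def FeasiblePathSet {m1 m2 n : ℕ} (s g : Fin n → Fin m1 × Fin m2)
    (P : Fin n → ℕ → Fin m1 × Fin m2) : Prop :=
  (∀ i, P i 0 = s i) ∧
  (∀ i, ∀ t : ℕ, 0 < t → (P i t = P i (t - 1) ∨ GridAdj (P i (t - 1)) (P i t))) ∧
  (∀ i, ∃ T, ∀ t ≥ T, P i t = g i) ∧
  (∀ t, ∀ i j, i ≠ j → P i t ≠ P j t) ∧
  (∀ t, ∀ i j, i ≠ j → ¬(P i t = P j (t + 1) ∧ P j t = P i (t + 1)))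

/-- The makespan of the path set `P` is at most `K`. -/
def MakespanLE {m1 m2 n : ℕ} (g : Fin n → Fin m1 × Fin m2)
    (P : Fin n → ℕ → Fin m1 × Fin m2) (K : ℕ) : Prop :=
  ∀ i, ∀ t, K ≤ t → P i t = g i

/-! ### Products of simultaneous moves -/

/-- A simultaneous move of agents occupying every vertex: the agent at `v` goes to `f v`,
each agent waits or moves along an edge, and no two agents exchange places. -/
structure IsStep {V : Type*} (adj : V → V → Prop) (f : Equiv.Perm V) : Prop where
  move : ∀ v, f v = v ∨ adj v (f v)
  noswap : ∀ v, f (f v) = v → f v = v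

/-- `Reach adj A d π`: the permutation `π` is a product of `d` simultaneous moves, each of which
moves only agents standing in `A`. -/
def Reach {V : Type*} (adj : V → V → Prop) (A : Set V) : ℕ → Equiv.Perm V → Prop
  | 0, π => π = 1
  | d + 1, π => ∃ f ρ, IsStep adj f ∧ (∀ v, v ∉ A → f v = v) ∧ Reach adj A d ρ ∧ π = f * ρ

section Reach

variable {V : Type*} {adj : V → V → Prop} {A : Set V}

theorem isStep_one : IsStep adj (1 : Equiv.Perm V) := ⟨fun _ => Or.inl rfl, fun _ h => h⟩

theorem IsStep.inv (hadj : ∀ u v, adj u v → adj v u) {f : Equiv.Perm V} (hf : IsStep adj f) :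
    IsStep adj f⁻¹ := by
  refine ⟨fun v => ?_, fun v hv => ?_⟩
  · rcases hf.move (f⁻¹ v) with h | h
    · left; simpa using h.symm
    · right; exact hadj _ _ (by simpa using h)
  · have h1 : f (f v) = v := by
      have := congrArg (fun x => f (f x)) hv
      simpa using this.symm
    have h2 := hf.noswap v h1
    rw [Equiv.Perm.inv_eq_iff_eq, h2]

theorem Reach.one (d : ℕ) : Reach adj A d 1 := by
  induction d with
  | zero => rfl
  | succ d ih => exact ⟨1, 1, isStep_one, fun _ _ => rfl, ih, by simp⟩

theorem Reach.of_step {f : Equiv.Perm V} (hf : IsStep adj f) (hA : ∀ v, v ∉ A → f v = v) :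
    Reach adj A 1 f :=
  ⟨f, 1, hf, hA, rfl, by simp⟩

theorem Reach.mul {d₁ d₂ : ℕ} {π₁ π₂ : Equiv.Perm V} (h₁ : Reach adj A d₁ π₁)
    (h₂ : Reach adj A d₂ π₂) : Reach adj A (d₁ + d₂) (π₁ * π₂) := by
  induction d₁ generalizing π₁ with
  | zero => rw [show π₁ = 1 from h₁]; simpa using h₂
  | succ d ih =>
    obtain ⟨f, ρ, hf, hA, hρ, rfl⟩ := h₁
    rw [Nat.succ_add]
    exact ⟨f, ρ * π₂, hf, hA, ih hρ, by rw [mul_assoc]⟩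

theorem Reach.mono {d d' : ℕ} {π : Equiv.Perm V} (h : Reach adj A d π) (hd : d ≤ d') :
    Reach adj A d' π := by
  obtain ⟨e, rfl⟩ := Nat.exists_eq_add_of_le hd
  simpa using h.mul (Reach.one e)

theorem Reach.mono_set {B : Set V} (hAB : A ⊆ B) {d : ℕ} {π : Equiv.Perm V}
    (h : Reach adj A d π) : Reach adj B d π := by
  induction d generalizing π with
  | zero => exact h
  | succ d ih =>
    obtain ⟨f, ρ, hf, hA, hρ, rfl⟩ := h
    exact ⟨f, ρ, hf, fun v hv => hA v fun hv' => hv (hAB hv'), ih hρ, rfl⟩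

theorem Reach.inv (hadj : ∀ u v, adj u v → adj v u) {d : ℕ} {π : Equiv.Perm V}
    (h : Reach adj A d π) : Reach adj A d π⁻¹ := by
  induction d generalizing π with
  | zero => rw [show π = 1 from h, inv_one]; rfl
  | succ d ih =>
    obtain ⟨f, ρ, hf, hA, hρ, rfl⟩ := h
    rw [mul_inv_rev]
    refine (ih hρ).mul (Reach.of_step (hf.inv hadj) fun v hv => ?_)
    rw [Equiv.Perm.inv_eq_iff_eq, hA v hv]

theorem Reach.fix {d : ℕ} {π : Equiv.Perm V} (h : Reach adj A d π) {v : V} (hv : v ∉ A) :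
    π v = v := by
  induction d generalizing π with
  | zero => rw [show π = 1 from h]; rfl
  | succ d ih =>
    obtain ⟨f, ρ, hf, hA, hρ, rfl⟩ := h
    rw [Equiv.Perm.mul_apply, ih hρ, hA v hv]

/-- Moves on a graph embedded in a larger one are moves of the larger graph. -/
theorem Reach.embed {V' : Type*} {adj' : V' → V' → Prop} (e : V' ↪ V)
    (he : ∀ u v, adj' u v → adj (e u) (e v)) {d : ℕ} {π : Equiv.Perm V'}
    (h : Reach adj' Set.univ d π) :
    ∃ Φ, Reach adj (Set.range e) d Φ ∧ ∀ u, Φ (e u) = e (π u) := by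
  classical
  induction d generalizing π with
  | zero => exact ⟨1, rfl, fun u => by rw [show π = 1 from h]; rfl⟩
  | succ d ih =>
    obtain ⟨f, ρ, hf, -, hρ, rfl⟩ := h
    obtain ⟨R, hR, hRe⟩ := ih hρ
    have hout : ∀ v, v ∉ Set.range e → f.viaEmbedding e v = v := fun v hv =>
      Equiv.Perm.viaEmbedding_apply_of_notMem f e v hv
    have hin : ∀ u, f.viaEmbedding e (e u) = e (f u) := fun u =>
      Equiv.Perm.viaEmbedding_apply f e u
    refine ⟨f.viaEmbedding e * R, ⟨f.viaEmbedding e, R, ⟨fun v => ?_, fun v hv => ?_⟩, hout, hR,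
      rfl⟩, fun u => by rw [Equiv.Perm.mul_apply, hRe, hin, Equiv.Perm.mul_apply]⟩
    · by_cases hv : v ∈ Set.range e
      · obtain ⟨u, rfl⟩ := hv
        rw [hin]
        rcases hf.move u with h | h
        · left; rw [h]
        · right; exact he _ _ h
      · left; exact hout v hv
    · by_cases hv' : v ∈ Set.range e
      · obtain ⟨u, rfl⟩ := hv'
        rw [hin] at hv ⊢
        rw [hin] at hv
        rw [hf.noswap u (e.injective hv)]
      · exact hout v hv'

/-- Moves carried out on the disjoint classes of a partition can be carried out in parallel. -/
theorem reach_par {ι : Type*} (κ : V → ι) {d : ℕ} (π : ι → Equiv.Perm V)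
    (h : ∀ i, Reach adj {v | κ v = i} d (π i)) :
    ∃ Φ, Reach adj Set.univ d Φ ∧ ∀ v, Φ v = π (κ v) v := by
  induction d generalizing π with
  | zero => exact ⟨1, rfl, fun v => by rw [show π (κ v) = 1 from h _]⟩
  | succ d ih =>
    choose f ρ hf hA hρ hπ using h
    obtain ⟨R, hR, hRv⟩ := ih ρ hρ
    have hκ : ∀ (i : ι) (g : Equiv.Perm V), (∀ v, κ v ≠ i → g v = v) →
        ∀ v, κ v = i → κ (g v) = i := by
      intro i g hg v hv
      by_contra hne
      have := g.injective (hg _ hne)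
      exact hne (by rw [this, hv])
    have hinv : ∀ (i : ι) v, κ v ≠ i → (f i)⁻¹ v = v := fun i v hv => by
      rw [Equiv.Perm.inv_eq_iff_eq, hA i v hv]
    let F : Equiv.Perm V :=
      { toFun := fun v => f (κ v) v
        invFun := fun v => (f (κ v))⁻¹ v
        left_inv := fun v => by
          show (f (κ (f (κ v) v)))⁻¹ (f (κ v) v) = v
          rw [hκ _ _ (hA (κ v)) v rfl]; simp
        right_inv := fun v => by
          show f (κ ((f (κ v))⁻¹ v)) ((f (κ v))⁻¹ v) = v
          rw [hκ _ _ (hinv (κ v)) v rfl]; simp }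
    have hF : ∀ v, F v = f (κ v) v := fun _ => rfl
    refine ⟨F * R, ⟨F, R, ⟨fun v => (hf (κ v)).move v, fun v hv => ?_⟩, fun v hv => by simp at hv,
      hR, rfl⟩, fun v => ?_⟩
    · rw [hF, hF, hκ _ _ (hA (κ v)) v rfl] at hv
      exact (hf (κ v)).noswap v hv
    · rw [Equiv.Perm.mul_apply, hRv, hF, hπ]
      have : κ (ρ (κ v) v) = κ v := hκ (κ v) _ (fun w hw => (hρ (κ v)).fix hw) v rfl
      rw [this, Equiv.Perm.mul_apply]

/-- The configurations visited by a product of moves. -/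
theorem Reach.exists_seq {d : ℕ} {π : Equiv.Perm V} (h : Reach adj A d π) :
    ∃ Q : ℕ → Equiv.Perm V, Q 0 = 1 ∧ (∀ t, d ≤ t → Q t = π) ∧
      ∀ t, ∃ f, IsStep adj f ∧ Q (t + 1) = f * Q t := by
  induction d generalizing π with
  | zero => exact ⟨fun _ => 1, rfl, fun _ _ => (show π = 1 from h).symm,
      fun _ => ⟨1, isStep_one, by simp⟩⟩
  | succ d ih =>
    obtain ⟨f, ρ, hf, -, hρ, rfl⟩ := h
    obtain ⟨Q, h0, hd, hs⟩ := ih hρ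
    refine ⟨fun t => if t ≤ d then Q t else f * ρ, by simp [h0], fun t ht => ?_, fun t => ?_⟩
    · simp [show ¬ t ≤ d by omega]
    · rcases lt_trichotomy t d with ht | rfl | ht
      · obtain ⟨g, hg, hQ⟩ := hs t
        exact ⟨g, hg, by simp [show t + 1 ≤ d by omega, show t ≤ d by omega, hQ]⟩
      · exact ⟨f, hf, by simp [hd t le_rfl]⟩
      · exact ⟨1, isStep_one, by simp [show ¬ t + 1 ≤ d by omega, show ¬ t ≤ d by omega]⟩

end Reach

theorem GridAdj.symm {a b : ℕ} (u v : Fin a × Fin b) (h : GridAdj u v) : GridAdj v u := by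
  unfold GridAdj at *; omega

/-- A product of moves turning the start positions into the goal positions yields a feasible path
set. -/
theorem exists_paths {a b n : ℕ} {s g : Fin n → Fin a × Fin b} (hs : Function.Injective s)
    {d : ℕ} {π : Equiv.Perm (Fin a × Fin b)} (h : Reach GridAdj Set.univ d π)
    (hπ : ∀ i, π (s i) = g i) : ∃ P, FeasiblePathSet s g P ∧ MakespanLE g P d := by
  obtain ⟨Q, h0, hd, hstep⟩ := h.exists_seq
  have hend : ∀ i t, d ≤ t → Q t (s i) = g i := fun i t ht => by rw [hd t ht, hπ]
  refine ⟨fun i t => Q t (s i), ⟨fun i => by simp [h0], fun i t ht => ?_, fun i => ⟨d, hend i⟩,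
    fun t i j hij he => hij (hs ((Q t).injective he)), fun t i j hij he => ?_⟩, hend⟩
  · obtain ⟨f, hf, hQ⟩ := hstep (t - 1)
    rw [show t - 1 + 1 = t by omega] at hQ
    simp only [hQ, Equiv.Perm.mul_apply]
    exact hf.move _
  · obtain ⟨f, hf, hQ⟩ := hstep t
    simp only [hQ, Equiv.Perm.mul_apply] at he
    obtain ⟨h1, h2⟩ := he
    have h3 := hf.noswap (Q t (s i)) (by rw [← h2, ← h1])
    rw [← h2] at h3
    exact hij (hs ((Q t).injective h3)).symm

/-! ### Odd-even merge-split sorting -/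

section Sorting

variable {α : Type*}

theorem card_le_of_balanced {S : Finset α} {m k : ℕ} {f : α → ℕ} (hf : ∀ a ∈ S, f a < m)
    (hc : ∀ x < m, (S.filter fun a => f a = x).card = k) (b : ℕ) :
    (S.filter fun a => b ≤ f a).card = k * (m - b) := by
  classical
  rw [Finset.card_eq_sum_card_fiberwise (f := f) (t := Finset.Ico b m)]
  · rw [Finset.sum_congr rfl (g := fun _ => k)]
    · simp [mul_comm]
    · intro x hx
      rw [Finset.mem_Ico] at hx
      rw [← hc x hx.2, Finset.filter_filter]
      congr 1
      ext a; simp only [Finset.mem_filter]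
      constructor
      · rintro ⟨h, -, h'⟩; exact ⟨h, h'⟩
      · rintro ⟨h, rfl⟩; exact ⟨h, hx.1, rfl⟩
  · intro a ha
    simp only [Finset.coe_filter, Set.mem_ofPred_eq] at ha
    simp [ha.2, hf a ha.1]

/-- Odd-even transposition sort on `m` columns, each holding `k` agents, finishes in `m` rounds.
In round `t` the columns are paired as windows `(x, x + 1)` with `x ≡ t` modulo 2, and within each
window the `k` agents with the smallest targets go to the left column.

For a threshold `θ`, let `N t b` count the agents with target at least `θ` in columns `≥ b` at time
`t`. A round with a window straddling the boundary before column `b` gives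
`N (t + 1) b ≥ min (N t (b - 1)) (N t (b + 1) + k)`, and the resulting lower bound
on `N m θ` is the total number of agents with target at least `θ`. -/
theorem odd_even_sort {S : Finset α} {m k : ℕ} {p : ℕ → α → ℕ} {τ : α → ℕ}
    (hp : ∀ t ≤ m, ∀ a ∈ S, p t a < m) (hτ : ∀ a ∈ S, τ a < m)
    (hpc : ∀ t ≤ m, ∀ x < m, (S.filter fun a => p t a = x).card = k)
    (hτc : ∀ x < m, (S.filter fun a => τ a = x).card = k)
    (hw : ∀ t < m, ∀ a ∈ S, (p (t + 1) a + t % 2) / 2 = (p t a + t % 2) / 2)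
    (hs : ∀ t < m, ∀ a ∈ S, ∀ b ∈ S, (p t a + t % 2) / 2 = (p t b + t % 2) / 2 →
      p (t + 1) a < p (t + 1) b → τ a ≤ τ b) :
    ∀ a ∈ S, p m a = τ a := by
  classical
  -- `N t b ≥ k * q / 2`, where `q` is the minimum of three quantities: the first two express that
  -- `N t b` cannot exceed the number of targets `≥ θ` or the capacity of the columns `≥ b`, and the
  -- third grows by two whenever a window straddles the boundary before `b`. At `t = m`, `b = θ` the
  -- minimum is `2 * (m - θ)`.
  have key : ∀ θ ≤ m, ∀ t ≤ m, ∀ b ≤ m, ∀ q : ℤ, q ≤ 2 * (m - θ) → q ≤ 2 * (m - b) →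
      q ≤ (t : ℤ) - ((t + b) % 2 : ℕ) - b + ((m - θ) + ((m - θ) % 2 : ℕ)) →
      k * q ≤ 2 * ((S.filter fun a => θ ≤ τ a ∧ b ≤ p t a).card : ℤ) := by
    intro θ hθ t
    have hT : (S.filter fun a => θ ≤ τ a).card = k * (m - θ) := card_le_of_balanced hτ hτc θ
    have hk : (0 : ℤ) ≤ k := by positivity
    induction t with
    | zero =>
      intro _ b hb q h1 h2 h3
      have hB : (S.filter fun a => b ≤ p 0 a).card = k * (m - b) :=
        card_le_of_balanced (hp 0 (by omega)) (hpc 0 (by omega)) b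
      have hA : (S.filter fun a => 0 ≤ p 0 a).card = k * (m - 0) :=
        card_le_of_balanced (hp 0 (by omega)) (hpc 0 (by omega)) 0
      have hu : (S.filter fun a => θ ≤ τ a).card + (S.filter fun a => b ≤ p 0 a).card ≤
          (S.filter fun a => θ ≤ τ a ∧ b ≤ p 0 a).card + (S.filter fun a => 0 ≤ p 0 a).card := by
        rw [← Finset.card_union_add_card_inter, add_comm, ← Finset.filter_and]
        gcongr
        intro a; simp only [Finset.mem_union, Finset.mem_filter]; simp; tauto
      rw [hT, hB, hA] at hu
      zify [hθ, hb] at hu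
      have hq : q ≤ 0 ∨ q ≤ 2 * (m - θ) - 2 * b := by omega
      rcases hq with hq | hq
      · exact (mul_nonpos_of_nonneg_of_nonpos hk hq).trans (by positivity)
      · have := mul_le_mul_of_nonneg_left hq hk
        simp at hu ⊢
        linarith
    | succ t ih =>
      intro ht b hb q h1 h2 h3
      have hw' := hw t (by omega)
      have hs' := hs t (by omega)
      rcases Nat.eq_zero_or_pos b with rfl | hb0
      · have := mul_le_mul_of_nonneg_left h1 hk
        simp only [zero_le, and_true, hT]
        push_cast [hθ]
        linarith
      rcases hb.eq_or_lt with rfl | hbm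
      · have := mul_nonpos_of_nonneg_of_nonpos hk (show q ≤ 0 by omega)
        exact this.trans (by positivity)
      by_cases hpar : (t + b) % 2 = 0
      -- the boundary before column `b` separates two windows of round `t`
      · have heq : (S.filter fun a => θ ≤ τ a ∧ b ≤ p (t + 1) a) =
            S.filter fun a => θ ≤ τ a ∧ b ≤ p t a := by
          apply Finset.filter_congr
          intro a ha
          have := hw' a ha
          constructor <;> rintro ⟨h, h'⟩ <;> exact ⟨h, by omega⟩
        rw [heq]
        exact ih (by omega) b hb q h1 h2 (by push_cast at h3 ⊢; omega)
      -- columns `b - 1` and `b` form a window of round `t`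
      · by_cases hall : ∀ a ∈ S, p (t + 1) a = b → θ ≤ τ a
        · have hsub : (S.filter fun a => θ ≤ τ a ∧ b + 1 ≤ p t a).card +
              (S.filter fun a => p (t + 1) a = b).card ≤
              (S.filter fun a => θ ≤ τ a ∧ b ≤ p (t + 1) a).card := by
            rw [← Finset.card_union_of_disjoint]
            · apply Finset.card_le_card
              intro a
              simp only [Finset.mem_union, Finset.mem_filter]
              rintro (⟨ha, h, h'⟩ | ⟨ha, h⟩)
              · have := hw' a ha
                exact ⟨ha, h, by omega⟩
              · exact ⟨ha, hall a ha h, by omega⟩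
            · rw [Finset.disjoint_filter]
              rintro a ha ⟨-, h⟩ h'
              have := hw' a ha
              omega
          rw [hpc (t + 1) ht b hbm] at hsub
          have := ih (by omega) (b + 1) (by omega) (q - 2) (by omega) (by push_cast; omega)
            (by push_cast at h3 ⊢; omega)
          have hsub' := Int.ofNat_le.2 hsub
          push_cast at hsub'
          linarith
        · push Not at hall
          obtain ⟨c, hc, hcb, hcθ⟩ := hall
          have hsub : (S.filter fun a => θ ≤ τ a ∧ b - 1 ≤ p t a).card ≤
              (S.filter fun a => θ ≤ τ a ∧ b ≤ p (t + 1) a).card := by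
            apply Finset.card_le_card
            intro a
            simp only [Finset.mem_filter]
            rintro ⟨ha, h, h'⟩
            refine ⟨ha, h, ?_⟩
            have := hw' a ha
            have := hw' c hc
            by_contra hlt
            have := hs' a ha c hc (by omega) (by omega)
            omega
          have := ih (by omega) (b - 1) (by omega) q (by omega) (by omega)
            (by push_cast [hb0] at h3 ⊢; omega)
          have hsub' := Int.ofNat_le.2 hsub
          linarith
  have hge : ∀ a ∈ S, τ a ≤ p m a := by
    intro a ha
    have hlt := hτ a ha
    have h := key (τ a) hlt.le m le_rfl (τ a) hlt.le (2 * (m - τ a)) le_rfl le_rfl (by omega)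
    have hT : (S.filter fun b => τ a ≤ τ b).card = k * (m - τ a) :=
      card_le_of_balanced hτ hτc _
    have hsub : (S.filter fun b => τ a ≤ τ b ∧ τ a ≤ p m b) = S.filter fun b => τ a ≤ τ b := by
      apply Finset.eq_of_subset_of_card_le
      · intro b; simp only [Finset.mem_filter]; tauto
      · rw [hT, ← Int.ofNat_le]
        push_cast [hlt.le]
        linarith
    have : a ∈ S.filter fun b => τ a ≤ τ b := by simp [ha]
    rw [← hsub] at this
    exact (Finset.mem_filter.1 this).2.2
  have hsum : ∀ f : α → ℕ, (∀ a ∈ S, f a < m) →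
      (∀ x < m, (S.filter fun a => f a = x).card = k) →
      ∑ a ∈ S, f a = ∑ x ∈ Finset.range m, k * x := by
    intro f hf hc
    rw [← Finset.sum_fiberwise_of_maps_to (g := f) (t := Finset.range m)
      (fun a ha => by simpa using hf a ha)]
    refine Finset.sum_congr rfl fun x hx => ?_
    rw [Finset.sum_congr rfl (g := fun _ => x) (fun a ha => (Finset.mem_filter.1 ha).2),
      Finset.sum_const, hc x (by simpa using hx), smul_eq_mul]
  have heq : ∑ a ∈ S, τ a = ∑ a ∈ S, p m a := by
    rw [hsum τ hτ hτc, hsum (p m) (hp m le_rfl) (hpc m le_rfl)]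
  intro a ha
  exact ((Finset.sum_eq_sum_iff_of_le hge).1 heq a ha).symm

end Sorting

/-- If every round of odd-even sorting can be carried out by simultaneous moves, in all lines
`ℓ = const` at once, then every line-preserving rearrangement into prescribed columns is a product
of moves. -/
theorem sort_engine {V Λ : Type*} [Fintype V] [DecidableEq Λ] {adj : V → V → Prop} (ℓ : V → Λ)
    (col : V → ℕ) (k : Λ → ℕ) (m : ℕ) (hcol : ∀ v, col v < m)
    (hfib : ∀ l, ∀ x < m, (Finset.univ.filter fun v => ℓ v = l ∧ col v = x).card = k l)
    (c : ℕ → ℕ)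
    (hround : ∀ t < m, ∀ lab : V → ℕ, ∃ ρ, Reach adj Set.univ (c t) ρ ∧ (∀ v, ℓ (ρ v) = ℓ v) ∧
      (∀ v, (col (ρ v) + t % 2) / 2 = (col v + t % 2) / 2) ∧
      ∀ u v, ℓ u = ℓ v → (col u + t % 2) / 2 = (col v + t % 2) / 2 → col (ρ u) < col (ρ v) →
        lab u ≤ lab v)
    (τ : V → ℕ) (hτ : ∀ v, τ v < m)
    (hτc : ∀ l, ∀ x < m, (Finset.univ.filter fun v => ℓ v = l ∧ τ v = x).card = k l) :
    ∃ π, Reach adj Set.univ (∑ t ∈ Finset.range m, c t) π ∧ (∀ v, ℓ (π v) = ℓ v) ∧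
      ∀ v, col (π v) = τ v := by
  have hround' : ∀ t, ∀ lab : V → ℕ, ∃ ρ : Equiv.Perm V, t < m → Reach adj Set.univ (c t) ρ ∧
      (∀ v, ℓ (ρ v) = ℓ v) ∧ (∀ v, (col (ρ v) + t % 2) / 2 = (col v + t % 2) / 2) ∧
      ∀ u v, ℓ u = ℓ v → (col u + t % 2) / 2 = (col v + t % 2) / 2 → col (ρ u) < col (ρ v) →
        lab u ≤ lab v := by
    intro t lab
    by_cases ht : t < m
    · obtain ⟨ρ, h⟩ := hround t ht lab
      exact ⟨ρ, fun _ => h⟩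
    · exact ⟨1, fun h => absurd h ht⟩
  choose ρ hρ using hround'
  -- `Φ t` is the motion during the first `t` rounds; agents are labelled by their targets
  let Φ : ℕ → Equiv.Perm V := fun t =>
    Nat.rec 1 (fun t π => ρ t (fun v => τ (π⁻¹ v)) * π) t
  have hΦ : ∀ t, Φ (t + 1) = ρ t (fun v => τ ((Φ t)⁻¹ v)) * Φ t := fun t => rfl
  have hreach : ∀ t ≤ m, Reach adj Set.univ (∑ i ∈ Finset.range t, c i) (Φ t) := by
    intro t
    induction t with
    | zero => intro _; exact Reach.one _
    | succ t ih =>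
      intro ht
      rw [hΦ, Finset.sum_range_succ, add_comm]
      exact (hρ t _ (by omega)).1.mul (ih (by omega))
  have hline : ∀ t ≤ m, ∀ v, ℓ (Φ t v) = ℓ v := by
    intro t
    induction t with
    | zero => intro _ v; rfl
    | succ t ih =>
      intro ht v
      rw [hΦ, Equiv.Perm.mul_apply, (hρ t _ (by omega)).2.1, ih (by omega)]
  refine ⟨Φ m, hreach m le_rfl, hline m le_rfl, fun v => ?_⟩
  refine odd_even_sort (S := Finset.univ.filter fun a => ℓ a = ℓ v) (m := m) (k := k (ℓ v))
    (p := fun t a => col (Φ t a)) (τ := τ) (fun t _ a _ => hcol _) (fun a _ => hτ a) ?_ ?_ ?_ ?_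
    v (by simp)
  · intro t ht x hx
    rw [← hfib (ℓ v) x hx, Finset.filter_filter]
    refine Finset.card_bij (fun a _ => Φ t a) ?_ (fun a _ b _ h => (Φ t).injective h) ?_
    · intro a; simp only [Finset.mem_filter, Finset.mem_univ, true_and, hline t ht]; exact id
    · intro b hb
      obtain ⟨a, rfl⟩ := (Φ t).surjective b
      simp only [Finset.mem_filter, Finset.mem_univ, true_and, hline t ht] at hb
      exact ⟨a, by simpa using hb, rfl⟩
  · intro x hx
    rw [← hτc (ℓ v) x hx, Finset.filter_filter]
  · intro t ht a _
    simp only [hΦ, Equiv.Perm.mul_apply]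
    exact (hρ t _ ht).2.2.1 _
  · intro t ht a ha b hb hab hlt
    simp only [Finset.mem_filter, Finset.mem_univ, true_and] at ha hb
    simp only [hΦ, Equiv.Perm.mul_apply] at hlt
    have := (hρ t _ ht).2.2.2 _ _ (by rw [hline t ht.le, hline t ht.le, ha, hb]) hab hlt
    simpa using this

/-! ### Local gadgets: small blocks checked by computation -/

/-- Adjacency of cells of a grid of width `w` whose cells are numbered row by row:
cell `i` stands for column `i % w` and row `i / w`. -/
def BAdj (w i j : ℕ) : Prop :=
  (i / w = j / w ∧ (i % w + 1 = j % w ∨ j % w + 1 = i % w)) ∨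
    (i % w = j % w ∧ (i / w + 1 = j / w ∨ j / w + 1 = i / w))

instance (w i j : ℕ) : Decidable (BAdj w i j) := by unfold BAdj; infer_instance

/-- The list `p`, read as the map `i ↦ p[i]`, is a simultaneous move on the `n` cells of a block of
width `w`. -/
def ValidMove (w n : ℕ) (p : List ℕ) : Prop :=
  p.length = n ∧ p.Nodup ∧ ∀ i < n, p.getD i 0 < n ∧ (p.getD i 0 = i ∨ BAdj w i (p.getD i 0)) ∧
    (p.getD (p.getD i 0) 0 = i → p.getD i 0 = i)

instance (w n : ℕ) (p : List ℕ) : Decidable (ValidMove w n p) := by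
  unfold ValidMove; infer_instance

/-- Row-by-row numbering of the cells of a block with `w` columns and `h` rows. -/
def cell {w h : ℕ} : Fin w × Fin h ≃ Fin (h * w) := (Equiv.prodComm _ _).trans finProdFinEquiv

theorem cell_val {w h : ℕ} (v : Fin w × Fin h) : (cell v : ℕ) = v.1 + w * v.2 := rfl

theorem cell_mod {w h : ℕ} (v : Fin w × Fin h) : (cell v : ℕ) % w = v.1 := by
  rw [cell_val, Nat.add_mul_mod_self_left, Nat.mod_eq_of_lt v.1.2]

theorem cell_div {w h : ℕ} (v : Fin w × Fin h) : (cell v : ℕ) / w = v.2 := by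
  rw [cell_val, Nat.add_mul_div_left _ _ v.1.pos, Nat.div_eq_of_lt v.1.2, zero_add]

theorem gridAdj_of_bAdj {w h : ℕ} {u v : Fin w × Fin h} (huv : BAdj w (cell u) (cell v)) :
    GridAdj u v := by
  unfold BAdj at huv
  rw [cell_mod, cell_mod, cell_div, cell_div] at huv
  unfold GridAdj
  omega

theorem ValidMove.exists_perm {w h : ℕ} {p : List ℕ} (hp : ValidMove w (h * w) p) :
    ∃ f : Equiv.Perm (Fin w × Fin h), Reach GridAdj Set.univ 1 f ∧
      ∀ v, (cell (f v) : ℕ) = p.getD (cell v) 0 := by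
  obtain ⟨hlen, hnd, hp⟩ := hp
  let F : Fin w × Fin h → Fin w × Fin h := fun v =>
    cell.symm ⟨p.getD (cell v) 0, (hp _ (cell v).2).1⟩
  have hF : ∀ v, (cell (F v) : ℕ) = p.getD (cell v) 0 := fun v => by simp [F]
  have hinj : Function.Injective F := by
    intro u v huv
    have h1 : p.getD (cell u) 0 = p.getD (cell v) 0 := by rw [← hF, ← hF, huv]
    have hu : (cell u : ℕ) < p.length := by rw [hlen]; exact (cell u).2
    have hv : (cell v : ℕ) < p.length := by rw [hlen]; exact (cell v).2
    rw [List.getD_eq_getElem _ _ hu, List.getD_eq_getElem _ _ hv, hnd.getElem_inj_iff] at h1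
    exact cell.injective (Fin.ext h1)
  let f : Equiv.Perm (Fin w × Fin h) := Equiv.ofBijective F (Finite.injective_iff_bijective.1 hinj)
  have hf : ∀ v, (cell (f v) : ℕ) = p.getD (cell v) 0 := hF
  refine ⟨f, Reach.of_step ⟨fun v => ?_, fun v hv => ?_⟩ fun v hv => absurd trivial hv, hf⟩
  · rcases (hp _ (cell v).2).2.1 with h | h
    · left; exact cell.injective (Fin.ext (by rw [hf, h]))
    · right; exact gridAdj_of_bAdj (by rw [hf]; exact h)
  · have := (hp _ (cell v).2).2.2 (by rw [← hf, ← hf, hv])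
    exact cell.injective (Fin.ext (by rw [hf, this]))

/-- The cell reached from cell `i` after the moves of the list `ms`, first to last. -/
def runMoves (ms : List (List ℕ)) (i : ℕ) : ℕ := ms.foldl (fun v p => p.getD v 0) i

theorem exists_perm_runMoves {w h : ℕ} (ms : List (List ℕ))
    (hms : ∀ p ∈ ms, ValidMove w (h * w) p) :
    ∃ π : Equiv.Perm (Fin w × Fin h), Reach GridAdj Set.univ ms.length π ∧
      ∀ v, (cell (π v) : ℕ) = runMoves ms (cell v) := by
  induction ms with
  | nil => exact ⟨1, rfl, fun v => rfl⟩
  | cons p ms ih =>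
    obtain ⟨π, hπ, hr⟩ := ih fun q hq => hms q (by simp [hq])
    obtain ⟨f, hf, hfp⟩ := (hms p (by simp)).exists_perm
    refine ⟨π * f, hπ.mul hf, fun v => ?_⟩
    rw [Equiv.Perm.mul_apply, hr, hfp]
    rfl

theorem exists_testBit {n : ℕ} (S : Fin n → Prop) [DecidablePred S] :
    ∃ c < 2 ^ n, ∀ i : Fin n, c.testBit i = decide (S i) :=
  ⟨Nat.ofBits fun i => decide (S i), Nat.ofBits_lt_two_pow _,
    fun i => by rw [Nat.testBit_ofBits_lt _ _ i.2]⟩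

/-- Rotation of the `L` rungs of a ladder starting at rung `s`, as an image list: in one direction
the agents of column `0` move towards rung `s`, in the other direction away from it. -/
def rungRotation (s L : ℕ) (dir : Bool) : List ℕ :=
  (List.range L).flatMap fun r =>
    if dir then [if r = 0 then 2 * s + 1 else 2 * (s + r - 1),
      if r + 1 = L then 2 * (s + r) else 2 * (s + r + 1) + 1]
    else [if r + 1 = L then 2 * (s + r) + 1 else 2 * (s + r + 1),
      if r = 0 then 2 * s else 2 * (s + r - 1) + 1]

/-- All ways of cutting rungs `s, …, s + n - 1` of a ladder into intervals, each of which is a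
single idle rung or is rotated in one of the two directions. The first argument is recursion fuel,
at least `n`. -/
def rungMoves : ℕ → ℕ → ℕ → List (List ℕ)
  | 0, _, _ => [[]]
  | fuel + 1, n, s =>
    if n = 0 then [[]] else
      (rungMoves fuel (n - 1) (s + 1)).map ([2 * s, 2 * s + 1] ++ ·) ++
      (List.range (n - 1)).flatMap fun L =>
        (rungMoves fuel (n - 2 - L) (s + L + 2)).flatMap fun rest =>
          [rungRotation s (L + 2) true ++ rest, rungRotation s (L + 2) false ++ rest]

/-- Moves of the ladder with `k` rungs. -/
def ladderMoves (k : ℕ) : List (List ℕ) := rungMoves k k 0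

theorem validMove_of_mem_ladderMoves {k : ℕ} (h3 : 3 ≤ k) (h6 : k ≤ 6) {p : List ℕ}
    (hp : p ∈ ladderMoves k) : ValidMove 2 (k * 2) p := by
  revert p
  interval_cases k <;> decide +kernel

/-! ### Collecting a prescribed half of a ladder in one column -/

/-- The image under `i ↦ p[i]` of a set of cells, sets being encoded by the binary digits of a
natural number. -/
def img : List ℕ → ℕ → ℕ
  | [], _ => 0
  | a :: p, c => c % 2 * 2 ^ a ||| img p (c / 2)

/-- The number of elements below `n` of an encoded set. -/
def popCount : ℕ → ℕ → ℕ
  | 0, _ => 0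
  | n + 1, c => c % 2 + popCount n (c / 2)

/-- Union of a list of encoded sets. -/
def bigOr (l : List ℕ) : ℕ := l.foldr (· ||| ·) 0

/-- Column `0` of the ladder with `k` rungs, as an encoded set. -/
def leftColumn (k : ℕ) : ℕ := (4 ^ k - 1) / 3

/-- The images of column `0` under one move. -/
def reachOne (k : ℕ) : List ℕ := (ladderMoves k).map (img · (leftColumn k))

/-- The images of column `0` under two moves; this is an encoded set of encoded sets. -/
def reachTwo (k : ℕ) : ℕ :=
  bigOr ((reachOne k).map fun c => bigOr ((ladderMoves k).map fun p => 2 ^ img p c))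

/-- With `R` the sets of cells at distance two from column `0`, this says that every set of `k`
cells is at distance two or three. -/
def splitCheck (k R : ℕ) : Bool :=
  (List.range (2 ^ (k * 2))).all fun c =>
    popCount (k * 2) c != k || R.testBit c || (ladderMoves k).any fun p => R.testBit (img p c)

/-- The values of `reachTwo`. -/
def reachTwoTable (k : ℕ) : ℕ :=
  match k with
  | 3 => 78270006875940992
  | 4 => 1774342044350424423458864326234509691208657830692958409606990020783144960
  | 5 => 641378096495612024100207968711343416970087929834906690443585562727820193177681308101847125383606001787206096766421289976697346367283881990761729585450850758822232619803965960153056030629254365138722786501585977841480308221622404529406483308970323843106547738671111368337786117668620276242317312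
  | _ => 10950182545208299417300252797351321456170421425197746799592132123823775032537752954036689249746456342358208194889987576877588654043536749049956599854403644558650570203709822755524738952748946304618751718267982912269699201082205664542470284626841780448358122157252700235484438986972086672904474112977460151548162734282976957020151027847218123680846917136620587291174253786618867535062813442302158946460266048073924808221370021102817159102754224173350327680273045638535310344053560747464158080971384531138654036337232257464967812960678884300822143342920965437584099475069528524310438339350615490498542550096122588312336525901182009866655035419225638552135164046258681726644176634119246081610518851176478859040591406559532979516797451921311497787383668890125358419080477110576329708138488774829836886138511268283085640531336909626313949729324821228455593801802707263957869722495534962012961674634477303949114147380045558907073760543713008406825287429774032076440798426202775973992757375432610569066957282316860486335293317046936980275713530715125619413778135867102653193670636186308635453085458842690465077499656151296246764445945547092389051417303688684079434498205994620822707240960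

theorem reachTwo_eq {k : ℕ} (h3 : 3 ≤ k) (h6 : k ≤ 6) : reachTwo k = reachTwoTable k := by
  interval_cases k <;> decide +kernel

theorem splitCheck_eq_true {k : ℕ} (h3 : 3 ≤ k) (h6 : k ≤ 6) :
    splitCheck k (reachTwoTable k) = true := by
  interval_cases k <;> decide +kernel

theorem leftColumn_testBit {k : ℕ} (h3 : 3 ≤ k) (h6 : k ≤ 6) (v : Fin 2 × Fin k) :
    (leftColumn k).testBit (cell v) = decide (v.1 = 0) := by
  revert v
  interval_cases k <;> decide +kernel

theorem testBit_img (p : List ℕ) (c j : ℕ) :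
    (img p c).testBit j = true ↔ ∃ i, p[i]? = some j ∧ c.testBit i = true := by
  induction p generalizing c with
  | nil => simp [img]
  | cons a p ih =>
    rw [img, Nat.testBit_or, Bool.or_eq_true, ih]
    have h0 : (c % 2 * 2 ^ a).testBit j = true ↔ a = j ∧ c.testBit 0 = true := by
      rcases Nat.mod_two_eq_zero_or_one c with h | h <;>
        simp [h, Nat.testBit_zero, Nat.testBit_two_pow]
    rw [h0]
    constructor
    · rintro (⟨rfl, h⟩ | ⟨i, h, h'⟩)
      · exact ⟨0, by simp, h⟩
      · exact ⟨i + 1, by simpa using h, by rwa [Nat.testBit_succ]⟩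
    · rintro ⟨i, h, h'⟩
      cases i with
      | zero => left; exact ⟨by simpa using h, h'⟩
      | succ i => right; exact ⟨i, by simpa using h, by rwa [← Nat.testBit_succ]⟩

theorem testBit_bigOr (l : List ℕ) (j : ℕ) :
    (bigOr l).testBit j = true ↔ ∃ x ∈ l, x.testBit j = true := by
  induction l with
  | nil => simp [bigOr]
  | cons a l ih =>
    rw [show bigOr (a :: l) = a ||| bigOr l from rfl, Nat.testBit_or, Bool.or_eq_true, ih]
    simp

theorem popCount_eq (n c : ℕ) :
    popCount n c = (Finset.univ.filter fun i : Fin n => c.testBit i = true).card := by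
  induction n generalizing c with
  | zero => simp [popCount]
  | succ n ih =>
    rw [popCount, ih, Finset.card_filter, Finset.card_filter, Fin.sum_univ_succ]
    congr 1
    · rcases Nat.mod_two_eq_zero_or_one c with h | h <;> simp [h, Nat.testBit_zero]
    · simp [Nat.testBit_succ]

theorem exists_perm_img {k : ℕ} (h3 : 3 ≤ k) (h6 : k ≤ 6) {p : List ℕ} (hp : p ∈ ladderMoves k)
    (c : ℕ) : ∃ f : Equiv.Perm (Fin 2 × Fin k), Reach GridAdj Set.univ 1 f ∧
      ∀ v, (img p c).testBit (cell (f v)) = c.testBit (cell v) := by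
  have hv := validMove_of_mem_ladderMoves h3 h6 hp
  obtain ⟨f, hf, hfp⟩ := hv.exists_perm
  obtain ⟨hlen, hnd, -⟩ := hv
  refine ⟨f, hf, fun v => ?_⟩
  have hlt : (cell v : ℕ) < p.length := by rw [hlen]; exact (cell v).2
  rw [Bool.eq_iff_iff, testBit_img, hfp, List.getD_eq_getElem _ _ hlt]
  constructor
  · rintro ⟨i, hi, hc⟩
    obtain ⟨hi', hi⟩ := List.getElem?_eq_some_iff.1 hi
    rw [hnd.getElem_inj_iff] at hi
    rwa [← hi]
  · intro hc
    exact ⟨cell v, by simp [hlt], hc⟩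

/-- On a ladder with `3 ≤ k ≤ 6` rungs, any `k` agents can be brought to column `0` in three
moves. -/
theorem ladder_split {k : ℕ} (h3 : 3 ≤ k) (h6 : k ≤ 6) (S : Finset (Fin 2 × Fin k))
    (hS : S.card = k) : ∃ π : Equiv.Perm (Fin 2 × Fin k), Reach GridAdj Set.univ 3 π ∧
      ∀ v, (π v).1 = 0 ↔ v ∈ S := by
  classical
  have htwo : ∀ c, (reachTwo k).testBit c = true → ∃ π : Equiv.Perm (Fin 2 × Fin k),
      Reach GridAdj Set.univ 2 π ∧ ∀ v, (leftColumn k).testBit (cell (π v)) =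
        c.testBit (cell v) := by
    intro c hc
    rw [reachTwo, testBit_bigOr] at hc
    obtain ⟨x, hx, hc⟩ := hc
    obtain ⟨c₁, hc₁, rfl⟩ := List.mem_map.1 hx
    rw [testBit_bigOr] at hc
    obtain ⟨x, hx, hc⟩ := hc
    obtain ⟨p₂, hp₂, rfl⟩ := List.mem_map.1 hx
    obtain ⟨p₁, hp₁, rfl⟩ := List.mem_map.1 hc₁
    rw [Nat.testBit_two_pow, decide_eq_true_eq] at hc
    obtain ⟨f₁, hf₁, h₁⟩ := exists_perm_img h3 h6 hp₁ (leftColumn k)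
    obtain ⟨f₂, hf₂, h₂⟩ := exists_perm_img h3 h6 hp₂ (img p₁ (leftColumn k))
    refine ⟨(f₂ * f₁)⁻¹, (hf₂.mul hf₁).inv GridAdj.symm, fun v => ?_⟩
    obtain ⟨u, rfl⟩ := (f₂ * f₁).surjective v
    rw [← hc, Equiv.Perm.mul_apply, h₂, h₁]
    congr 3
    exact Equiv.Perm.inv_eq_iff_eq.2 rfl
  obtain ⟨c, hclt, hc⟩ := exists_testBit fun i : Fin (k * 2) => cell.symm i ∈ S
  have hcS : ∀ v, c.testBit (cell v) = decide (v ∈ S) := fun v => by rw [hc]; simp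
  have hpop : popCount (k * 2) c = k := by
    refine (popCount_eq _ _).trans (Eq.trans (Eq.symm ?_) hS)
    refine Finset.card_bij (fun v _ => cell v) (fun v hv => ?_)
      (fun u _ v _ h => cell.injective h) fun i hi => ⟨cell.symm i, ?_, by simp⟩
    · simp [hcS, hv]
    · simpa [hc] using hi
  have hcheck := splitCheck_eq_true h3 h6
  rw [splitCheck, List.all_eq_true] at hcheck
  have := hcheck c (List.mem_range.2 hclt)
  rw [← reachTwo_eq h3 h6] at this
  simp only [hpop, bne_self_eq_false, Bool.false_or, Bool.or_eq_true, List.any_eq_true] at this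
  have hfin : ∀ π : Equiv.Perm (Fin 2 × Fin k), (∀ v, (leftColumn k).testBit (cell (π v)) =
        c.testBit (cell v)) → ∀ v, (π v).1 = 0 ↔ v ∈ S := by
    intro π h v
    have := h v
    rw [leftColumn_testBit h3 h6, hcS, decide_eq_decide] at this
    exact this
  rcases this with h | ⟨p, hp, h⟩
  · obtain ⟨π, hπ, h⟩ := htwo c h
    exact ⟨π, hπ.mono (by norm_num), hfin π h⟩
  · obtain ⟨π, hπ, h⟩ := htwo _ h
    obtain ⟨f, hf, hfi⟩ := exists_perm_img h3 h6 hp c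
    exact ⟨π * f, hπ.mul hf, hfin _ fun v => by rw [Equiv.Perm.mul_apply, h, hfi]⟩

/-! ### Exchanging prescribed pairs of neighbours -/

/-- Words in the moves `ladderMoves k`: entry `S` exchanges the two agents on each rung in the
encoded set `S`. -/
def swapWords (k : ℕ) : List (List ℕ) :=
  match k with
  | 3 => [[], [3, 1, 6, 2, 5], [1, 6, 3], [1, 3, 1, 6, 2, 3], [1, 1, 3, 6, 2], [1, 3, 2, 6, 1, 5],
      [1, 1, 3, 6, 6, 3], [1, 1, 3, 2, 4, 2, 3]]
  | 4 => [[], [7, 3, 14, 4, 13], [3, 14, 7], [3, 7, 3, 14, 4, 7], [1, 6, 3], [7, 3, 12, 5, 7], [3,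
      12, 15], [3, 7, 3, 12, 5, 13], [1, 1, 3, 6, 2], [9, 3, 12, 3, 9], [1, 1, 3, 16, 11], [5,
      9, 3, 16, 6, 7], [1, 1, 3, 6, 6, 3], [1, 9, 3, 16, 6, 13], [1, 3, 6, 4, 9, 14], [3, 9, 3,
      12, 3, 15]]
  | _ => [[], [17, 7, 32, 8, 31], [7, 32, 17], [7, 17, 7, 32, 8, 17], [3, 14, 7], [17, 7, 26, 13,
      17], [7, 26, 37], [7, 17, 7, 26, 13, 31], [1, 6, 3], [17, 7, 26, 9, 29], [13, 40, 19], [7,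
      17, 13, 40, 8, 19], [3, 12, 15], [17, 7, 26, 15, 21], [9, 30, 37], [7, 17, 7, 26, 15, 35],
      [1, 1, 3, 6, 2], [19, 13, 40, 14, 39], [1, 1, 13, 40, 21], [7, 19, 15, 38, 10, 19], [1, 1,
      3, 16, 11], [19, 9, 26, 15, 19], [1, 1, 13, 30, 35], [7, 19, 9, 26, 15, 33], [1, 1, 3, 6,
      6, 3], [1, 19, 13, 40, 16, 37], [1, 1, 3, 29, 40, 13], [9, 34, 14, 39, 15, 38], [1, 3, 6,
      4, 9, 14], [1, 23, 29, 12, 37, 29], [1, 3, 6, 12, 23, 40], [9, 19, 13, 40, 16, 23]]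

theorem swapWords_check {k : ℕ} (h3 : 3 ≤ k) (h5 : k ≤ 5) : ∀ S < 2 ^ k,
    ((swapWords k).getD S []).length ≤ 7 ∧
    (∀ i ∈ (swapWords k).getD S [], i < (ladderMoves k).length) ∧
    ∀ i < k * 2, runMoves (((swapWords k).getD S []).map fun i => (ladderMoves k).getD i []) i =
      if S.testBit (i / 2) then 2 * (i / 2) + (1 - i % 2) else i := by
  interval_cases k <;> decide +kernel

/-- On a ladder with `3 ≤ k ≤ 5` rungs, any set of rungs can have its agents exchanged in seven
moves. -/
theorem ladder_swap {k : ℕ} (h3 : 3 ≤ k) (h5 : k ≤ 5) (S : Fin k → Prop) [DecidablePred S] :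
    ∃ π : Equiv.Perm (Fin 2 × Fin k), Reach GridAdj Set.univ 7 π ∧
      ∀ v, (π v).2 = v.2 ∧ (((π v).1 : ℕ) = if S v.2 then 1 - (v.1 : ℕ) else v.1) := by
  obtain ⟨c, hclt, hc⟩ := exists_testBit S
  obtain ⟨hlen, hmem, hrun⟩ := swapWords_check h3 h5 c hclt
  obtain ⟨π, hπ, h⟩ := exists_perm_runMoves (w := 2) (h := k)
    (((swapWords k).getD c []).map fun i => (ladderMoves k).getD i []) (by
      intro p hp
      obtain ⟨i, hi, rfl⟩ := List.mem_map.1 hp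
      rw [List.getD_eq_getElem _ _ (hmem i hi)]
      exact validMove_of_mem_ladderMoves h3 (by omega) (List.getElem_mem _))
  refine ⟨π, hπ.mono (by simpa using hlen), fun v => ?_⟩
  have := h v
  rw [hrun _ (cell v).2, cell_div, cell_mod, hc, cell_val, cell_val] at this
  simp only [decide_eq_true_eq] at this
  rw [Fin.ext_iff]
  have h1 := v.1.2
  have h2 := (π v).1.2
  split_ifs at this ⊢ <;> omega

/-- Moves on the block with four columns and `h` rows: entry `S` exchanges the agents of the two
middle columns in each row in the encoded set `S`. -/
def middleWords (h : ℕ) : List (List (List ℕ)) :=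
  match h with
  | 2 => [[],
      [[1, 2, 3, 7, 0, 4, 5, 6],
       [0, 1, 6, 2, 4, 5, 7, 3],
       [4, 0, 1, 3, 5, 6, 2, 7]],
      [[1, 2, 3, 7, 0, 4, 5, 6],
       [4, 0, 2, 3, 5, 1, 6, 7],
       [0, 5, 1, 2, 4, 6, 7, 3]],
      [[1, 2, 3, 7, 0, 4, 5, 6],
       [4, 0, 6, 2, 5, 1, 7, 3],
       [0, 5, 1, 3, 4, 6, 2, 7]]]
  | _ => [[],
      [[1, 2, 3, 7, 0, 9, 5, 11, 4, 8, 6, 10],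
       [0, 1, 6, 2, 4, 5, 10, 3, 8, 9, 11, 7],
       [4, 0, 1, 3, 8, 6, 2, 7, 9, 5, 10, 11]],
      [[1, 2, 3, 7, 0, 9, 5, 11, 4, 8, 6, 10],
       [4, 0, 2, 3, 8, 1, 6, 7, 9, 5, 10, 11],
       [0, 5, 1, 2, 4, 6, 10, 3, 8, 9, 11, 7]],
      [[1, 2, 3, 7, 0, 9, 5, 11, 4, 8, 6, 10],
       [4, 0, 6, 2, 8, 1, 10, 3, 9, 5, 11, 7],
       [0, 5, 1, 3, 4, 6, 2, 7, 8, 9, 10, 11]],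
      [[1, 2, 3, 7, 0, 4, 10, 6, 8, 5, 9, 11],
       [0, 1, 2, 3, 5, 9, 6, 7, 4, 8, 10, 11],
       [4, 0, 1, 2, 8, 5, 7, 3, 9, 10, 6, 11]],
      [[1, 2, 3, 7, 0, 4, 10, 6, 8, 5, 9, 11],
       [0, 1, 6, 2, 5, 9, 7, 3, 4, 8, 10, 11],
       [4, 0, 1, 3, 8, 5, 2, 7, 9, 10, 6, 11]],
      [[1, 5, 3, 7, 0, 6, 2, 11, 4, 8, 9, 10],
       [4, 0, 6, 2, 8, 1, 7, 3, 9, 5, 10, 11],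
       [0, 1, 2, 3, 4, 9, 5, 6, 8, 10, 11, 7]],
      [[1, 2, 3, 7, 0, 9, 5, 11, 4, 8, 6, 10],
       [4, 0, 6, 2, 8, 1, 5, 3, 9, 10, 11, 7],
       [0, 5, 1, 3, 4, 9, 2, 7, 8, 10, 6, 11]]]

theorem middleWords_check {h : ℕ} (h2 : 2 ≤ h) (h3 : h ≤ 3) : ∀ S < 2 ^ h,
    ((middleWords h).getD S []).length ≤ 3 ∧
    (∀ p ∈ (middleWords h).getD S [], ValidMove 4 (h * 4) p) ∧
    ∀ i < h * 4, runMoves ((middleWords h).getD S []) i =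
      if S.testBit (i / 4) ∧ (i % 4 = 1 ∨ i % 4 = 2) then 4 * (i / 4) + (3 - i % 4) else i := by
  interval_cases h <;> decide +kernel

/-- On a block with four columns and two or three rows, any set of rows can have the agents of its
two middle columns exchanged in three moves. -/
theorem middle_swap {h : ℕ} (h2 : 2 ≤ h) (h3 : h ≤ 3) (S : Fin h → Prop) [DecidablePred S] :
    ∃ π : Equiv.Perm (Fin 4 × Fin h), Reach GridAdj Set.univ 3 π ∧
      ∀ v, (π v).2 = v.2 ∧ (((π v).1 : ℕ) =
        if S v.2 ∧ ((v.1 : ℕ) = 1 ∨ (v.1 : ℕ) = 2) then 3 - (v.1 : ℕ) else v.1) := by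
  obtain ⟨c, hclt, hc⟩ := exists_testBit S
  obtain ⟨hlen, hmem, hrun⟩ := middleWords_check h2 h3 c hclt
  obtain ⟨π, hπ, h⟩ := exists_perm_runMoves (w := 4) (h := h) _ hmem
  refine ⟨π, hπ.mono hlen, fun v => ?_⟩
  have := h v
  rw [hrun _ (cell v).2, cell_div, cell_mod, hc, cell_val, cell_val] at this
  simp only [decide_eq_true_eq] at this
  rw [Fin.ext_iff]
  have h1 := v.1.2
  have h2 := (π v).1.2
  split_ifs at this ⊢ <;> omega

/-! ### Cutting rows into groups -/

/-- A partition of `0, …, b - 1` into intervals of length between `lo` and `hi`. The interval of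
`y` is named by its first element `γ y`, and `sz (γ y)` is its length. -/
def IsGrouping (lo hi b : ℕ) (γ sz : ℕ → ℕ) : Prop :=
  ∀ y < b, lo ≤ sz (γ y) ∧ sz (γ y) ≤ hi ∧ γ y + sz (γ y) ≤ b ∧
    ∀ y', (γ y ≤ y' ∧ y' < γ y + sz (γ y)) ↔ (y' < b ∧ γ y' = γ y)

theorem IsGrouping.le_self {lo hi b : ℕ} {γ sz : ℕ → ℕ} (h : IsGrouping lo hi b γ sz) {y : ℕ}
    (hy : y < b) : γ y ≤ y :=
  (((h y hy).2.2.2 y).2 ⟨hy, rfl⟩).1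

theorem isGrouping_zero (lo hi : ℕ) : ∃ γ sz, IsGrouping lo hi 0 γ sz :=
  ⟨id, id, fun y hy => absurd hy (Nat.not_lt_zero y)⟩

theorem IsGrouping.append {lo hi b s : ℕ} (h : ∃ γ sz, IsGrouping lo hi b γ sz) (hlo : lo ≤ s)
    (hhi : s ≤ hi) : ∃ γ sz, IsGrouping lo hi (b + s) γ sz := by
  obtain ⟨γ, sz, h⟩ := h
  refine ⟨fun y => if y < b then γ y else b, fun i => if i = b then s else sz i, fun y hy => ?_⟩
  by_cases hyb : y < b
  · have h1 := h.le_self hyb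
    obtain ⟨h2, h3, h4, h5⟩ := h y hyb
    simp only [hyb, if_true, show γ y ≠ b by omega, if_false]
    refine ⟨h2, h3, by omega, fun y' => ?_⟩
    rw [h5]
    split_ifs <;> omega
  · simp only [hyb, if_false, if_true]
    refine ⟨hlo, hhi, le_rfl, fun y' => ?_⟩
    split_ifs with h'
    · have := h.le_self h'; omega
    · omega

theorem exists_grouping_two_three (b : ℕ) (hb : 2 ≤ b) : ∃ γ sz, IsGrouping 2 3 b γ sz := by
  induction b using Nat.strong_induction_on with
  | _ b ih =>
    rcases (show b = 0 + 2 ∨ b = 0 + 3 ∨ 4 ≤ b by omega) with rfl | rfl | h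
    · exact IsGrouping.append (isGrouping_zero _ _) (by norm_num) (by norm_num)
    · exact IsGrouping.append (isGrouping_zero _ _) (by norm_num) (by norm_num)
    · have := IsGrouping.append (s := 2) (ih (b - 2) (by omega) (by omega)) (by norm_num)
        (by norm_num)
      rwa [show b - 2 + 2 = b by omega] at this

theorem exists_grouping_three_five (b : ℕ) (hb : 3 ≤ b) : ∃ γ sz, IsGrouping 3 5 b γ sz := by
  induction b using Nat.strong_induction_on with
  | _ b ih =>
    rcases (show b = 0 + 3 ∨ b = 0 + 4 ∨ b = 0 + 5 ∨ 6 ≤ b by omega) with rfl | rfl | rfl | h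
    · exact IsGrouping.append (isGrouping_zero _ _) (by norm_num) (by norm_num)
    · exact IsGrouping.append (isGrouping_zero _ _) (by norm_num) (by norm_num)
    · exact IsGrouping.append (isGrouping_zero _ _) (by norm_num) (by norm_num)
    · have := IsGrouping.append (s := 3) (ih (b - 3) (by omega) (by omega)) (by norm_num)
        (by norm_num)
      rwa [show b - 3 + 3 = b by omega] at this

theorem exists_grouping_three_four (b : ℕ) (hb : 6 ≤ b) : ∃ γ sz, IsGrouping 3 4 b γ sz := by
  have h3 : ∃ γ sz, IsGrouping 3 4 3 γ sz :=
    IsGrouping.append (isGrouping_zero 3 4) (s := 3) (by norm_num) (by norm_num)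
  have h4 : ∃ γ sz, IsGrouping 3 4 4 γ sz :=
    IsGrouping.append (isGrouping_zero 3 4) (s := 4) (by norm_num) (by norm_num)
  induction b using Nat.strong_induction_on with
  | _ b ih =>
    rcases (show b = 3 + 3 ∨ b = 4 + 3 ∨ b = 4 + 4 ∨ 9 ≤ b by omega) with rfl | rfl | rfl | h
    · exact IsGrouping.append h3 (by norm_num) (by norm_num)
    · exact IsGrouping.append h4 (by norm_num) (by norm_num)
    · exact IsGrouping.append h4 (by norm_num) (by norm_num)
    · have := IsGrouping.append (s := 3) (ih (b - 3) (by omega) (by omega)) (by norm_num)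
        (by norm_num)
      rwa [show b - 3 + 3 = b by omega] at this

theorem IsGrouping.mono {lo hi hi' b : ℕ} {γ sz : ℕ → ℕ} (h : IsGrouping lo hi b γ sz)
    (hhi : hi ≤ hi') : IsGrouping lo hi' b γ sz := fun y hy =>
  ⟨(h y hy).1, (h y hy).2.1.trans hhi, (h y hy).2.2⟩

/-! ### One round of sorting on a grid -/

/-- Moves on a rectangular block, carried out inside a larger grid. -/
theorem rect_embed {a b w h d : ℕ} (x y : ℕ) (hx : x + w ≤ a) (hy : y + h ≤ b)
    {π₀ : Equiv.Perm (Fin w × Fin h)} (hπ : Reach GridAdj Set.univ d π₀) :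
    ∃ π : Equiv.Perm (Fin a × Fin b),
      Reach GridAdj {v | (x ≤ v.1 ∧ (v.1 : ℕ) < x + w) ∧ y ≤ v.2 ∧ (v.2 : ℕ) < y + h} d π ∧
      ∀ v : Fin a × Fin b, (x ≤ v.1 ∧ (v.1 : ℕ) < x + w) ∧ (y ≤ v.2 ∧ (v.2 : ℕ) < y + h) →
        ∃ u : Fin w × Fin h, (v.1 : ℕ) = x + u.1 ∧ (v.2 : ℕ) = y + u.2 ∧
          ((π v).1 : ℕ) = x + (π₀ u).1 ∧ ((π v).2 : ℕ) = y + (π₀ u).2 := by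
  let e : Fin w × Fin h ↪ Fin a × Fin b :=
    { toFun := fun u => (⟨x + u.1, by omega⟩, ⟨y + u.2, by omega⟩)
      inj' := fun u v huv => by
        simp only [Prod.mk.injEq, Fin.mk.injEq] at huv
        ext <;> omega }
  have he1 : ∀ u, ((e u).1 : ℕ) = x + u.1 := fun _ => rfl
  have he2 : ∀ u, ((e u).2 : ℕ) = y + u.2 := fun _ => rfl
  obtain ⟨π, hr, he⟩ := hπ.embed (adj := GridAdj) e (fun u v huv => by
    simp only [GridAdj, he1, he2] at huv ⊢
    push_cast
    omega)
  refine ⟨π, hr.mono_set ?_, fun v hv => ?_⟩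
  · rintro _ ⟨u, rfl⟩
    simp only [Set.mem_ofPred_eq, he1, he2]
    omega
  · obtain ⟨u, rfl⟩ : ∃ u, v = e u :=
      ⟨(⟨v.1 - x, by omega⟩, ⟨v.2 - y, by omega⟩), Prod.ext
        (Fin.ext (by rw [he1]; simp only; omega)) (Fin.ext (by rw [he2]; simp only; omega))⟩
    exact ⟨u, he1 u, he2 u, by rw [he, he1], by rw [he, he2]⟩

/-- If on every class of `κ` some local motion satisfies the relation `R` between pairs of starting
points and their images, then one global motion satisfies `R` on all classes. -/
theorem reach_par_rel {V ι : Type*} {adj : V → V → Prop} (κ : V → ι) {d : ℕ}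
    (R : V → V → V → V → Prop)
    (h : ∀ i, ∃ π : Equiv.Perm V, Reach adj {v | κ v = i} d π ∧
      ∀ u v, κ u = i → κ v = i → R u v (π u) (π v)) :
    ∃ ρ : Equiv.Perm V, Reach adj Set.univ d ρ ∧ (∀ v, κ (ρ v) = κ v) ∧
      ∀ u v, κ u = κ v → R u v (ρ u) (ρ v) := by
  choose π hπ hR using h
  obtain ⟨ρ, hρ, hv⟩ := reach_par κ π hπ
  refine ⟨ρ, hρ, fun v => ?_, fun u v huv => ?_⟩
  · rw [hv]
    by_contra hne
    have := (π (κ v)).injective ((hπ (κ v)).fix (v := π (κ v) v) hne)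
    exact hne (by rw [this])
  · rw [hv u, hv v, huv]
    exact hR _ u v huv rfl

/-- Some `k` elements have the smallest labels. -/
theorem exists_lowest {α : Type*} [Fintype α] (lab : α → ℕ) (k : ℕ) (hk : k ≤ Fintype.card α) :
    ∃ S : Finset α, S.card = k ∧ ∀ u ∈ S, ∀ v, v ∉ S → lab u ≤ lab v := by
  classical
  induction k with
  | zero => exact ⟨∅, rfl, by simp⟩
  | succ k ih =>
    obtain ⟨S, hS, hlow⟩ := ih (by omega)
    have hne : Sᶜ.Nonempty := by
      rw [← Finset.card_pos, Finset.card_compl]; omega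
    obtain ⟨w, hw, hmin⟩ := Finset.exists_min_image Sᶜ lab hne
    rw [Finset.mem_compl] at hw
    refine ⟨insert w S, by rw [Finset.card_insert_of_notMem hw, hS], fun u hu v hv => ?_⟩
    rw [Finset.mem_insert, not_or] at hv
    rcases Finset.mem_insert.1 hu with rfl | hu
    · exact hmin v (by simpa using hv.2)
    · exact hlow u hu v hv.2

/-- One round of merge-split: within every group of rows and every window of two columns, the agents
with the smallest labels are collected in the left column. -/
theorem split_round {m b : ℕ} {γ sz : ℕ → ℕ} (hG : IsGrouping 3 6 b γ sz) (t : ℕ)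
    (lab : Fin m × Fin b → ℕ) :
    ∃ ρ : Equiv.Perm (Fin m × Fin b), Reach GridAdj Set.univ 3 ρ ∧
      (∀ v, γ (ρ v).2 = γ v.2) ∧ (∀ v, ((ρ v).1 + t % 2) / 2 = ((v.1 : ℕ) + t % 2) / 2) ∧
      ∀ u v, γ u.2 = γ v.2 → ((u.1 : ℕ) + t % 2) / 2 = ((v.1 : ℕ) + t % 2) / 2 →
        ((ρ u).1 : ℕ) < (ρ v).1 → lab u ≤ lab v := by
  obtain ⟨ρ, hρ, hκ, hR⟩ := reach_par_rel (adj := GridAdj) (d := 3)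
    (fun v : Fin m × Fin b => (((v.1 : ℕ) + t % 2) / 2, γ v.2))
    (fun u v u' v' => (u'.1 : ℕ) < v'.1 → lab u ≤ lab v) (by
      rintro ⟨i, j⟩
      by_cases hne : ∃ v : Fin m × Fin b, ((v.1 : ℕ) + t % 2) / 2 = i ∧ γ v.2 = j
      swap
      · refine ⟨1, Reach.one _, fun u v hu _ => absurd ⟨u, ?_⟩ hne⟩
        simpa using hu
      obtain ⟨v₀, -, hj⟩ := hne
      obtain ⟨h1, h2, h3, h4⟩ := hG v₀.2 v₀.2.2
      rw [hj] at h1 h2 h3 h4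
      by_cases hwin : t % 2 ≤ 2 * i ∧ 2 * i - t % 2 + 2 ≤ m
      swap
      -- a window cut off by the border is a single column
      · refine ⟨1, Reach.one _, fun u v hu hv hlt => ?_⟩
        simp only [Prod.mk.injEq] at hu hv
        have := u.1.2
        have := v.1.2
        simp only [Equiv.Perm.one_apply] at hlt
        omega
      let pt : Fin 2 × Fin (sz j) → Fin m × Fin b := fun u =>
        (⟨2 * i - t % 2 + u.1, by omega⟩, ⟨j + u.2, by omega⟩)
      obtain ⟨S, hS, hlow⟩ := exists_lowest (fun u => lab (pt u)) (sz j) (by simp; omega)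
      obtain ⟨π₀, hπ₀, hS'⟩ := ladder_split h1 h2 S hS
      obtain ⟨π, hπ, hv⟩ := rect_embed (a := m) (b := b) (2 * i - t % 2) j hwin.2 h3 hπ₀
      have hpt : ∀ (v : Fin m × Fin b) (u : Fin 2 × Fin (sz j)),
          (v.1 : ℕ) = 2 * i - t % 2 + u.1 → (v.2 : ℕ) = j + u.2 → v = pt u := by
        intro v u h h'
        ext <;> simp [pt, h, h']
      refine ⟨π, hπ.mono_set fun v hv => ?_, fun u v hu hv' hlt => ?_⟩
      · have h5 := (h4 v.2).1 hv.2
        have h6 := hv.1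
        simp only [Set.mem_ofPred_eq, Prod.mk.injEq]
        exact ⟨by omega, h5.2⟩
      · simp only [Prod.mk.injEq] at hu hv'
        obtain ⟨u₀, hu1, hu2, hu3, -⟩ := hv u ⟨by omega, (h4 u.2).2 ⟨u.2.2, hu.2⟩⟩
        obtain ⟨v₀, hv1, hv2, hv3, -⟩ := hv v ⟨by omega, (h4 v.2).2 ⟨v.2.2, hv'.2⟩⟩
        rw [hpt u u₀ hu1 hu2, hpt v v₀ hv1 hv2]
        refine hlow u₀ ((hS' u₀).1 ?_) v₀ (fun hvS => ?_)
        · ext; simp; omega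
        · have := (hS' v₀).2 hvS
          rw [this] at hv3
          simp at hv3
          omega)
  refine ⟨ρ, hρ, fun v => ?_, fun v => ?_, fun u v h1 h2 => hR u v ?_⟩
  · have := hκ v; simp only [Prod.mk.injEq] at this; exact this.2
  · have := hκ v; simp only [Prod.mk.injEq] at this; exact this.1
  · simp only [Prod.mk.injEq]; exact ⟨h2, h1⟩

/-- One round of odd-even transposition sort in all rows simultaneously. -/
theorem swap_round {m b : ℕ} (hb : 3 ≤ b) (t : ℕ) (lab : Fin m × Fin b → ℕ) :
    ∃ ρ : Equiv.Perm (Fin m × Fin b), Reach GridAdj Set.univ 7 ρ ∧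
      (∀ v, (ρ v).2 = v.2) ∧ (∀ v, ((ρ v).1 + t % 2) / 2 = ((v.1 : ℕ) + t % 2) / 2) ∧
      ∀ u v, u.2 = v.2 → ((u.1 : ℕ) + t % 2) / 2 = ((v.1 : ℕ) + t % 2) / 2 →
        ((ρ u).1 : ℕ) < (ρ v).1 → lab u ≤ lab v := by
  obtain ⟨γ, sz, hG⟩ := exists_grouping_three_five b hb
  obtain ⟨ρ, hρ, hκ, hR⟩ := reach_par_rel (adj := GridAdj) (d := 7)
    (fun v : Fin m × Fin b => (((v.1 : ℕ) + t % 2) / 2, γ v.2))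
    (fun u v u' v' => u'.2 = u.2 ∧ (u.2 = v.2 → (u'.1 : ℕ) < v'.1 → lab u ≤ lab v)) (by
      rintro ⟨i, j⟩
      by_cases hne : ∃ v : Fin m × Fin b, ((v.1 : ℕ) + t % 2) / 2 = i ∧ γ v.2 = j
      swap
      · refine ⟨1, Reach.one _, fun u v hu _ => absurd ⟨u, ?_⟩ hne⟩
        simpa using hu
      obtain ⟨v₀, -, hj⟩ := hne
      obtain ⟨h1, h2, h3, h4⟩ := hG v₀.2 v₀.2.2
      rw [hj] at h1 h2 h3 h4
      by_cases hwin : t % 2 ≤ 2 * i ∧ 2 * i - t % 2 + 2 ≤ m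
      swap
      · refine ⟨1, Reach.one _, fun u v hu hv => ⟨rfl, fun _ hlt => ?_⟩⟩
        simp only [Prod.mk.injEq] at hu hv
        have := u.1.2
        have := v.1.2
        simp only [Equiv.Perm.one_apply] at hlt
        omega
      let pt : Fin 2 × Fin (sz j) → Fin m × Fin b := fun u =>
        (⟨2 * i - t % 2 + u.1, by omega⟩, ⟨j + u.2, by omega⟩)
      obtain ⟨π₀, hπ₀, hS'⟩ := ladder_swap h1 h2 fun r => lab (pt (1, r)) < lab (pt (0, r))
      obtain ⟨π, hπ, hv⟩ := rect_embed (a := m) (b := b) (2 * i - t % 2) j hwin.2 h3 hπ₀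
      have hpt : ∀ (v : Fin m × Fin b) (u : Fin 2 × Fin (sz j)),
          (v.1 : ℕ) = 2 * i - t % 2 + u.1 → (v.2 : ℕ) = j + u.2 → v = pt u := by
        intro v u h h'
        ext <;> simp [pt, h, h']
      refine ⟨π, hπ.mono_set fun v hv => ?_, fun u v hu hv' => ?_⟩
      · have h5 := (h4 v.2).1 hv.2
        have h6 := hv.1
        simp only [Set.mem_ofPred_eq, Prod.mk.injEq]
        exact ⟨by omega, h5.2⟩
      · simp only [Prod.mk.injEq] at hu hv'
        obtain ⟨⟨cu, ru⟩, hu1, hu2, hu3, hu4⟩ := hv u ⟨by omega, (h4 u.2).2 ⟨u.2.2, hu.2⟩⟩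
        obtain ⟨⟨cv, rv⟩, hv1, hv2, hv3, -⟩ := hv v ⟨by omega, (h4 v.2).2 ⟨v.2.2, hv'.2⟩⟩
        obtain ⟨hSu1, hSu2⟩ := hS' (cu, ru)
        obtain ⟨-, hSv2⟩ := hS' (cv, rv)
        rw [hSu1] at hu4
        refine ⟨Fin.ext (by omega), fun huv hlt => ?_⟩
        have hr : ru = rv := by
          rw [Fin.ext_iff] at huv ⊢
          simp only at hu2 hv2
          omega
        subst hr
        rw [hpt u _ hu1 hu2, hpt v _ hv1 hv2]
        rw [hu3, hv3, hSu2, hSv2] at hlt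
        revert hlt
        fin_cases cu <;> fin_cases cv <;> simp <;> split_ifs <;> simp <;> omega)
  refine ⟨ρ, hρ, fun v => (hR v v rfl).1, fun v => ?_, fun u v h1 h2 => (hR u v ?_).2 h1⟩
  · have := hκ v; simp only [Prod.mk.injEq] at this; exact this.1
  · simp only [Prod.mk.injEq]; exact ⟨h2, by rw [h1]⟩

/-- On a grid with four columns, the odd rounds of transposition sort compare the two middle
columns only, which takes three moves. -/
theorem middle_round {b : ℕ} (hb : 2 ≤ b) {t : ℕ} (ht : t % 2 = 1) (lab : Fin 4 × Fin b → ℕ) :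
    ∃ ρ : Equiv.Perm (Fin 4 × Fin b), Reach GridAdj Set.univ 3 ρ ∧
      (∀ v, (ρ v).2 = v.2) ∧ (∀ v, ((ρ v).1 + t % 2) / 2 = ((v.1 : ℕ) + t % 2) / 2) ∧
      ∀ u v, u.2 = v.2 → ((u.1 : ℕ) + t % 2) / 2 = ((v.1 : ℕ) + t % 2) / 2 →
        ((ρ u).1 : ℕ) < (ρ v).1 → lab u ≤ lab v := by
  obtain ⟨γ, sz, hG⟩ := exists_grouping_two_three b hb
  rw [ht]
  obtain ⟨ρ, hρ, -, hR⟩ := reach_par_rel (adj := GridAdj) (d := 3)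
    (fun v : Fin 4 × Fin b => γ v.2)
    (fun u v u' v' => u'.2 = u.2 ∧ ((u'.1 : ℕ) + 1) / 2 = ((u.1 : ℕ) + 1) / 2 ∧
      (u.2 = v.2 → ((u.1 : ℕ) + 1) / 2 = ((v.1 : ℕ) + 1) / 2 → (u'.1 : ℕ) < v'.1 →
        lab u ≤ lab v)) (by
      intro j
      by_cases hne : ∃ v : Fin 4 × Fin b, γ v.2 = j
      swap
      · exact ⟨1, Reach.one _, fun u v hu _ => absurd ⟨u, hu⟩ hne⟩
      obtain ⟨v₀, hj⟩ := hne
      obtain ⟨h1, h2, h3, h4⟩ := hG v₀.2 v₀.2.2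
      rw [hj] at h1 h2 h3 h4
      let pt : Fin 4 × Fin (sz j) → Fin 4 × Fin b := fun u => (u.1, ⟨j + u.2, by omega⟩)
      obtain ⟨π₀, hπ₀, hS'⟩ := middle_swap h1 h2 fun r => lab (pt (2, r)) < lab (pt (1, r))
      obtain ⟨π, hπ, hv⟩ := rect_embed (a := 4) (b := b) 0 j (by norm_num) h3 hπ₀
      have hpt : ∀ (v : Fin 4 × Fin b) (u : Fin 4 × Fin (sz j)),
          (v.1 : ℕ) = 0 + u.1 → (v.2 : ℕ) = j + u.2 → v = pt u := by
        intro v u h h'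
        ext <;> simp [pt, h, h']
      refine ⟨π, hπ.mono_set fun v hv => ((h4 v.2).1 hv.2).2, fun u v hu hv' => ?_⟩
      obtain ⟨⟨cu, ru⟩, hu1, hu2, hu3, hu4⟩ := hv u ⟨by omega, (h4 u.2).2 ⟨u.2.2, hu⟩⟩
      obtain ⟨⟨cv, rv⟩, hv1, hv2, hv3, -⟩ := hv v ⟨by omega, (h4 v.2).2 ⟨v.2.2, hv'⟩⟩
      obtain ⟨hSu1, hSu2⟩ := hS' (cu, ru)
      obtain ⟨-, hSv2⟩ := hS' (cv, rv)
      rw [hSu1] at hu4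
      refine ⟨Fin.ext (by omega), ?_, fun huv hwin hlt => ?_⟩
      · rw [hu3, hSu2, hu1]
        fin_cases cu <;> simp <;> split_ifs <;> simp
      · have hr : ru = rv := by
          rw [Fin.ext_iff] at huv ⊢
          simp only at hu2 hv2
          omega
        subst hr
        rw [hu3, hv3, hSu2, hSv2] at hlt
        rw [hu1, hv1] at hwin
        rw [hpt u _ hu1 hu2, hpt v _ hv1 hv2]
        revert hlt hwin
        fin_cases cu <;> fin_cases cv <;> simp <;> split_ifs <;> simp <;> omega)
  exact ⟨ρ, hρ, fun v => (hR v v rfl).1, fun v => (hR v v rfl).2.1,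
    fun u v h1 => (hR u v (by rw [h1])).2.2 h1⟩

/-! ### Sorting phases -/

theorem card_filter_of_injective {a b : ℕ} {F : Fin a × Fin b → Fin a × Fin b}
    (hF : Function.Injective F) (γ : ℕ → ℕ) (i x : ℕ) (hx : x < a) :
    (Finset.univ.filter fun v => γ (F v).2 = i ∧ ((F v).1 : ℕ) = x).card =
      (Finset.univ.filter fun y : Fin b => γ y = i).card := by
  refine Finset.card_bij (fun v _ => (F v).2) (fun v hv => ?_) (fun u hu v hv h => ?_)
    (fun y hy => ?_)
  · simp only [Finset.mem_filter, Finset.mem_univ, true_and] at hv ⊢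
    exact hv.1
  · simp only [Finset.mem_filter, Finset.mem_univ, true_and] at hu hv
    exact hF (Prod.ext (Fin.ext (hu.2.trans hv.2.symm)) h)
  · obtain ⟨v, hv⟩ := (Finite.injective_iff_surjective.1 hF) (⟨x, hx⟩, y)
    simp only [Finset.mem_filter, Finset.mem_univ, true_and] at hy
    exact ⟨v, by simp [hv, hy], by rw [hv]⟩

/-- Odd-even sorting on a grid. If `F` is injective and preserves the groups of rows, then every
group contains equally many agents bound for each column, so the agents of each group can be sorted
by destination column. -/
theorem grid_sort {m b : ℕ} (γ : ℕ → ℕ) (c : ℕ → ℕ)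
    (hround : ∀ t < m, ∀ lab : Fin m × Fin b → ℕ, ∃ ρ : Equiv.Perm (Fin m × Fin b),
      Reach GridAdj Set.univ (c t) ρ ∧
      (∀ v, γ (ρ v).2 = γ v.2) ∧ (∀ v, ((ρ v).1 + t % 2) / 2 = ((v.1 : ℕ) + t % 2) / 2) ∧
      ∀ u v, γ u.2 = γ v.2 → ((u.1 : ℕ) + t % 2) / 2 = ((v.1 : ℕ) + t % 2) / 2 →
        ((ρ u).1 : ℕ) < (ρ v).1 → lab u ≤ lab v)
    {F : Fin m × Fin b → Fin m × Fin b} (hF : Function.Injective F)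
    (hγ : ∀ v, γ (F v).2 = γ v.2) :
    ∃ π : Equiv.Perm (Fin m × Fin b), Reach GridAdj Set.univ (∑ t ∈ Finset.range m, c t) π ∧
      (∀ v, γ (π v).2 = γ v.2) ∧ ∀ v, (π v).1 = (F v).1 := by
  obtain ⟨π, h1, h2, h3⟩ := sort_engine (adj := GridAdj) (fun v : Fin m × Fin b => γ v.2)
    (fun v => (v.1 : ℕ)) (fun i => (Finset.univ.filter fun y : Fin b => γ y = i).card) m
    (fun v => v.1.2) (fun i x hx => card_filter_of_injective Function.injective_id γ i x hx)
    c hround (fun v => ((F v).1 : ℕ)) (fun v => (F v).1.2) (fun i x hx => by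
      rw [← card_filter_of_injective hF γ i x hx]
      simp only [hγ])
  exact ⟨π, h1, h2, fun v => Fin.ext (h3 v)⟩

/-- Sorting by columns when agents may be permuted freely inside groups of rows. -/
theorem group_sort {m b : ℕ} {γ sz : ℕ → ℕ} (hG : IsGrouping 3 6 b γ sz)
    {F : Fin m × Fin b → Fin m × Fin b} (hF : Function.Injective F)
    (hγ : ∀ v, γ (F v).2 = γ v.2) :
    ∃ π : Equiv.Perm (Fin m × Fin b), Reach GridAdj Set.univ (3 * m) π ∧
      (∀ v, γ (π v).2 = γ v.2) ∧ ∀ v, (π v).1 = (F v).1 := by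
  have := grid_sort γ (fun _ => 3) (fun t _ lab => split_round hG t lab) hF hγ
  simpa [mul_comm] using this

/-- Row-preserving permutations are obtained by sorting with prescribed costs of the rounds. -/
theorem rows_sort {m b : ℕ} (c : ℕ → ℕ)
    (hround : ∀ t < m, ∀ lab : Fin m × Fin b → ℕ, ∃ ρ : Equiv.Perm (Fin m × Fin b),
      Reach GridAdj Set.univ (c t) ρ ∧
      (∀ v, (ρ v).2 = v.2) ∧ (∀ v, ((ρ v).1 + t % 2) / 2 = ((v.1 : ℕ) + t % 2) / 2) ∧
      ∀ u v, u.2 = v.2 → ((u.1 : ℕ) + t % 2) / 2 = ((v.1 : ℕ) + t % 2) / 2 →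
        ((ρ u).1 : ℕ) < (ρ v).1 → lab u ≤ lab v)
    {F : Fin m × Fin b → Fin m × Fin b} (hF : Function.Injective F) (hrow : ∀ v, (F v).2 = v.2) :
    ∃ π : Equiv.Perm (Fin m × Fin b), Reach GridAdj Set.univ (∑ t ∈ Finset.range m, c t) π ∧
      ∀ v, π v = F v := by
  obtain ⟨π, h1, h2, h3⟩ := grid_sort (m := m) (b := b) id c (fun t ht lab => by
    obtain ⟨ρ, h1, h2, h3, h4⟩ := hround t ht lab
    exact ⟨ρ, h1, fun v => by rw [h2], h3, fun u v h => h4 u v (Fin.ext h)⟩) hF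
    (fun v => by rw [hrow])
  exact ⟨π, h1, fun v => Prod.ext (h3 v) ((Fin.ext (h2 v)).trans (hrow v).symm)⟩

theorem line_sort {m b : ℕ} (hb : 3 ≤ b) {F : Fin m × Fin b → Fin m × Fin b}
    (hF : Function.Injective F) (hrow : ∀ v, (F v).2 = v.2) :
    ∃ π : Equiv.Perm (Fin m × Fin b), Reach GridAdj Set.univ (7 * m) π ∧ ∀ v, π v = F v := by
  have := rows_sort (fun _ => 7) (fun t _ lab => swap_round hb t lab) hF hrow
  simpa [mul_comm] using this

/-- Rows of length three or four are sorted in constant time: three rounds of seven moves, or two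
rounds of seven moves and two of three. -/
theorem strip_sort {w b : ℕ} (hw : 3 ≤ w) (hw' : w ≤ 4) (hb : 3 ≤ b)
    {F : Fin w × Fin b → Fin w × Fin b} (hF : Function.Injective F)
    (hrow : ∀ v, (F v).2 = v.2) :
    ∃ π : Equiv.Perm (Fin w × Fin b), Reach GridAdj Set.univ 21 π ∧ ∀ v, π v = F v := by
  obtain rfl | rfl : w = 3 ∨ w = 4 := by omega
  · exact line_sort hb hF hrow
  · obtain ⟨π, h, h'⟩ := rows_sort (fun t => if t % 2 = 1 then 3 else 7) (fun t _ lab => by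
      by_cases ht : t % 2 = 1
      · simpa only [ht, if_true] using middle_round (by omega) ht lab
      · simpa only [ht, if_false] using swap_round hb t lab) hF hrow
    exact ⟨π, h.mono (by decide), h'⟩

theorem Reach.transpose {a b d : ℕ} {π : Equiv.Perm (Fin b × Fin a)}
    (h : Reach GridAdj Set.univ d π) :
    ∃ π' : Equiv.Perm (Fin a × Fin b), Reach GridAdj Set.univ d π' ∧
      ∀ v, π' v = (π v.swap).swap := by
  obtain ⟨π', h1, h2⟩ := h.embed (adj := GridAdj) (Equiv.prodComm (Fin b) (Fin a)).toEmbedding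
    (fun u v huv => by
      simp only [GridAdj, Equiv.coe_toEmbedding, Equiv.prodComm_apply, Prod.fst_swap,
        Prod.snd_swap] at huv ⊢
      omega)
  exact ⟨π', h1.mono_set (Set.subset_univ _), fun v => h2 v.swap⟩

theorem swap_conj_injective {a b : ℕ} {F : Fin a × Fin b → Fin a × Fin b}
    (hF : Function.Injective F) : Function.Injective fun v : Fin b × Fin a => (F v.swap).swap :=
  Prod.swap_injective.comp (hF.comp Prod.swap_injective)

/-- The transpose of `group_sort`: rows are prescribed, and groups of columns are preserved. -/
theorem group_sort_vertical {a b : ℕ} {γ sz : ℕ → ℕ} (hG : IsGrouping 3 6 a γ sz)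
    {F : Fin a × Fin b → Fin a × Fin b} (hF : Function.Injective F)
    (hγ : ∀ v, γ (F v).1 = γ v.1) :
    ∃ π : Equiv.Perm (Fin a × Fin b), Reach GridAdj Set.univ (3 * b) π ∧
      (∀ v, γ (π v).1 = γ v.1) ∧ ∀ v, (π v).2 = (F v).2 := by
  obtain ⟨π, h1, h2, h3⟩ := group_sort hG (swap_conj_injective hF) (fun v => hγ v.swap)
  obtain ⟨π', h1', h⟩ := h1.transpose
  exact ⟨π', h1', fun v => by rw [h]; exact h2 v.swap, fun v => by rw [h]; exact h3 v.swap⟩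

theorem line_sort_vertical {a b : ℕ} (ha : 3 ≤ a) {F : Fin a × Fin b → Fin a × Fin b}
    (hF : Function.Injective F) (hcol : ∀ v, (F v).1 = v.1) :
    ∃ π : Equiv.Perm (Fin a × Fin b), Reach GridAdj Set.univ (7 * b) π ∧ ∀ v, π v = F v := by
  obtain ⟨π, h1, h2⟩ := line_sort ha (swap_conj_injective hF) (fun v => hcol v.swap)
  obtain ⟨π', h1', h⟩ := h1.transpose
  exact ⟨π', h1', fun v => by rw [h, h2]; simp⟩

/-- A permutation that preserves every row and every strip of three or four columns is a product of
`21` moves: the strips are sorted in parallel. -/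
theorem strips_sort {a b : ℕ} {γ sz : ℕ → ℕ} (hG : IsGrouping 3 4 a γ sz) (hb : 3 ≤ b)
    {F : Fin a × Fin b → Fin a × Fin b} (hF : Function.Injective F)
    (hrow : ∀ v, (F v).2 = v.2) (hγ : ∀ v, γ (F v).1 = γ v.1) :
    ∃ π : Equiv.Perm (Fin a × Fin b), Reach GridAdj Set.univ 21 π ∧ ∀ v, π v = F v := by
  have key : ∀ i, ∃ π : Equiv.Perm (Fin a × Fin b),
      Reach GridAdj {v : Fin a × Fin b | γ v.1 = i} 21 π ∧ ∀ v, γ v.1 = i → π v = F v := by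
    intro i
    by_cases hne : ∃ v : Fin a × Fin b, γ v.1 = i
    swap
    · exact ⟨1, Reach.one _, fun v hv => absurd ⟨v, hv⟩ hne⟩
    obtain ⟨v₀, hi⟩ := hne
    obtain ⟨h1, h2, h3, h4⟩ := hG v₀.1 v₀.1.2
    rw [hi] at h1 h2 h3 h4
    let pt : Fin (sz i) × Fin b → Fin a × Fin b := fun u => (⟨i + u.1, by omega⟩, u.2)
    have hpt : ∀ u, i ≤ (F (pt u)).1 ∧ ((F (pt u)).1 : ℕ) < i + sz i := fun u =>
      (h4 _).2 ⟨(F (pt u)).1.2, by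
        rw [hγ]; exact ((h4 (i + u.1)).1 ⟨by omega, by omega⟩).2⟩
    let F₀ : Fin (sz i) × Fin b → Fin (sz i) × Fin b := fun u =>
      (⟨(F (pt u)).1 - i, by have := hpt u; omega⟩, u.2)
    have hF₀ : Function.Injective F₀ := by
      intro u v huv
      simp only [F₀, Prod.mk.injEq, Fin.mk.injEq] at huv
      have h5 := hpt u
      have h6 := hpt v
      have h7 : pt u = pt v := hF (Prod.ext (Fin.ext (by omega)) (by
        rw [hrow, hrow]; exact huv.2))
      simp only [pt, Prod.mk.injEq, Fin.mk.injEq] at h7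
      exact Prod.ext (Fin.ext (by omega)) h7.2
    obtain ⟨π₀, hπ₀, hv₀⟩ := strip_sort h1 h2 hb hF₀ (fun _ => rfl)
    obtain ⟨π, hπ, hv⟩ := rect_embed (a := a) (b := b) i 0 h3 (by omega) hπ₀
    refine ⟨π, hπ.mono_set fun v hv => ((h4 _).1 hv.1).2, fun v hvi => ?_⟩
    obtain ⟨u, hu1, hu2, hu3, hu4⟩ := hv v ⟨(h4 _).2 ⟨v.1.2, hvi⟩, by omega⟩
    have hvu : v = pt u := Prod.ext (Fin.ext hu1) (Fin.ext (by rw [hu2, zero_add]))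
    rw [hv₀] at hu3 hu4
    have h5 := hpt u
    have h6 := hrow v
    rw [← hvu] at h5
    simp only [F₀, ← hvu] at hu3 hu4
    refine Prod.ext (Fin.ext (by omega)) (Fin.ext ?_)
    rw [h6]; omega
  choose π hπ hv using key
  obtain ⟨Φ, hΦ, h⟩ := reach_par (fun v : Fin a × Fin b => γ v.1) π hπ
  exact ⟨Φ, hΦ, fun v => by rw [h, hv _ _ rfl]⟩

/-! ### Decomposing a regular bipartite multigraph into perfect matchings -/

/-- König's theorem: the edges `S` of a `d`-regular bipartite multigraph, the edge `e` joining `f e`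
to `g e`, can be coloured by `d` colours so that edges with a common end have different colours. -/
theorem exists_edge_coloring {α : Type*} [DecidableEq α] {n : ℕ} (f g : α → Fin n) (d : ℕ) :
    ∀ S : Finset α, (∀ x, (S.filter fun e => f e = x).card = d) →
      (∀ x, (S.filter fun e => g e = x).card = d) →
      ∃ r : α → ℕ, (∀ e ∈ S, r e < d) ∧
        ∀ e ∈ S, ∀ e' ∈ S, r e = r e' → (f e = f e' ∨ g e = g e') → e = e' := by
  induction d with
  | zero =>
    intro S hf _
    have hS : ∀ e, e ∉ S := fun e he => by
      have := hf (f e)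
      rw [Finset.card_eq_zero] at this
      exact Finset.notMem_empty e (this ▸ by simp [he])
    exact ⟨fun _ => 0, fun e he => absurd he (hS e), fun e he => absurd he (hS e)⟩
  | succ d ih =>
    intro S hf hg
    have hcount : ∀ (h : α → Fin n), (∀ x, (S.filter fun e => h e = x).card = d + 1) →
        ∀ X : Finset (Fin n), (S.filter fun e => h e ∈ X).card = X.card * (d + 1) := by
      intro h hh X
      rw [Finset.card_eq_sum_card_fiberwise (f := h) (t := X) (fun e he => by
        simpa using (Finset.mem_filter.1 he).2)]
      rw [← smul_eq_mul, ← Finset.sum_const]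
      refine Finset.sum_congr rfl fun x hx => ?_
      rw [← hh x, Finset.filter_filter]
      congr 1
      ext e
      simp only [Finset.mem_filter]
      constructor
      · rintro ⟨h1, -, h3⟩; exact ⟨h1, h3⟩
      · rintro ⟨h1, h3⟩; exact ⟨h1, h3 ▸ hx, h3⟩
    -- Hall's condition: the `(d + 1) * #X` edges leaving `X` all end in the neighbourhood of `X`
    obtain ⟨M, hM, hMmem⟩ := (Finset.all_card_le_biUnion_card_iff_exists_injective
      (fun x => (S.filter fun e => f e = x).image g)).1 (fun X => by
        refine Nat.le_of_mul_le_mul_right ?_ (Nat.succ_pos d)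
        rw [Nat.succ_eq_add_one, ← hcount f hf, ← hcount g hg]
        refine Finset.card_le_card fun e he => ?_
        rw [Finset.mem_filter] at he ⊢
        exact ⟨he.1, Finset.mem_biUnion.2 ⟨f e, he.2,
          Finset.mem_image_of_mem g (Finset.mem_filter.2 ⟨he.1, rfl⟩)⟩⟩)
    simp only [Finset.mem_image, Finset.mem_filter] at hMmem
    choose E hE hEM using hMmem
    have hsurj := Finite.injective_iff_surjective.1 hM
    obtain ⟨r, hr, hr'⟩ := ih (S \ Finset.univ.image E)
      (fun x => by
        have : ((S \ Finset.univ.image E).filter fun e => f e = x) =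
            (S.filter fun e => f e = x).erase (E x) := by
          ext e
          simp only [Finset.mem_filter, Finset.mem_sdiff, Finset.mem_image, Finset.mem_univ,
            true_and, Finset.mem_erase, not_exists]
          constructor
          · rintro ⟨⟨h1, h2⟩, h3⟩; exact ⟨fun h => h2 x h.symm, h1, h3⟩
          · rintro ⟨h1, h2, h3⟩
            refine ⟨⟨h2, fun y hy => h1 ?_⟩, h3⟩
            rw [← hy, (hE y).2] at h3
            rw [← hy, h3]
        rw [this, Finset.card_erase_of_mem (Finset.mem_filter.2 (hE x)), hf, Nat.add_sub_cancel])
      (fun y => by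
        obtain ⟨x, rfl⟩ := hsurj y
        have : ((S \ Finset.univ.image E).filter fun e => g e = M x) =
            (S.filter fun e => g e = M x).erase (E x) := by
          ext e
          simp only [Finset.mem_filter, Finset.mem_sdiff, Finset.mem_image, Finset.mem_univ,
            true_and, Finset.mem_erase, not_exists]
          constructor
          · rintro ⟨⟨h1, h2⟩, h3⟩; exact ⟨fun h => h2 x h.symm, h1, h3⟩
          · rintro ⟨h1, h2, h3⟩
            refine ⟨⟨h2, fun y hy => h1 ?_⟩, h3⟩
            rw [← hy, hEM y] at h3
            rw [← hy, hM h3]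
        rw [this, Finset.card_erase_of_mem (Finset.mem_filter.2 ⟨(hE x).1, hEM x⟩), hg,
          Nat.add_sub_cancel])
    simp only [Finset.mem_sdiff, Finset.mem_image, Finset.mem_univ, true_and] at hr hr'
    refine ⟨fun e => if ∃ x, E x = e then d else r e, fun e he => ?_, fun e he e' he' => ?_⟩
    · simp only
      split_ifs with h
      · omega
      · exact (hr e ⟨he, h⟩).trans (Nat.lt_succ_self d)
    · simp only
      split_ifs with h h' h'
      · obtain ⟨x, rfl⟩ := h
        obtain ⟨y, rfl⟩ := h'
        rw [(hE x).2, (hE y).2, hEM, hEM]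
        rintro - (h | h)
        · rw [h]
        · rw [hM h]
      · intro h1; have := hr e' ⟨he', h'⟩; omega
      · intro h1; have := hr e ⟨he, h⟩; omega
      · exact hr' e ⟨he, h⟩ e' ⟨he', h'⟩

/-! ### Routing an arbitrary permutation -/

theorem perm_inv_apply {α : Type*} (π : Equiv.Perm α) (v : α) : π⁻¹ (π v) = v := by simp

theorem card_column {a b : ℕ} (π : Equiv.Perm (Fin a × Fin b)) (x : Fin a) :
    (Finset.univ.filter fun v => (π v).1 = x).card = b := by
  have : (Finset.univ.filter fun v => (π v).1 = x).card = (Finset.univ : Finset (Fin b)).card := by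
    refine Finset.card_bij (fun v _ => (π v).2) (fun _ _ => Finset.mem_univ _)
      (fun u hu v hv h => π.injective (Prod.ext ?_ h)) (fun y _ => ?_)
    · rw [(Finset.mem_filter.1 hu).2, (Finset.mem_filter.1 hv).2]
    · exact ⟨π.symm (x, y), by simp, by simp⟩
  simpa using this

/-- In a grid of at most six rows, all rows form a single group: agents are first sorted into their
columns, and then every column is sorted. -/
theorem route_narrow {a b : ℕ} (hab : b ≤ a) (hb : 3 ≤ b) (hb' : b ≤ 6)
    (π : Equiv.Perm (Fin a × Fin b)) : Reach GridAdj Set.univ (7 * b + 3 * a) π := by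
  have hG : IsGrouping 3 6 b (fun _ => 0) (fun _ => b) := fun y hy => ⟨hb, hb', by simp, by simp⟩
  obtain ⟨π₁, h1, -, h2⟩ := group_sort hG π.injective (fun _ => rfl)
  obtain ⟨π₂, h3, h4⟩ := line_sort_vertical (F := fun v => π (π₁⁻¹ v)) (hb.trans hab)
    (π.injective.comp π₁⁻¹.injective) (fun v => by
      obtain ⟨u, rfl⟩ := π₁.surjective v
      simp [h2])
  have : π = π₂ * π₁ := by
    ext1 v
    rw [Equiv.Perm.mul_apply, h4]
    simp
  rw [this]
  exact h3.mul h1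

/-- In a grid of at least seven rows, the agents are first distributed over the rows in such a way
that every row receives one agent bound for each column (possible by König's theorem). They are then
sorted by column, then by row. All sorting is done in groups of three or four lines, so that at the
end every agent is in its row and at most three columns off. -/
theorem route_wide {a b : ℕ} (hab : b ≤ a) (hb : 7 ≤ b) (π : Equiv.Perm (Fin a × Fin b)) :
    Reach GridAdj Set.univ (21 + (3 * b + (3 * a + 3 * b))) π := by
  obtain ⟨γ, sz, hγ⟩ := exists_grouping_three_four a (by omega)
  obtain ⟨δ, sz', hδ⟩ := exists_grouping_three_four b (by omega)
  obtain ⟨r, hr, hr'⟩ := exists_edge_coloring (fun v : Fin a × Fin b => v.1) (fun v => (π v).1) b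
    Finset.univ (card_column 1) (card_column π)
  simp only [Finset.mem_univ, true_imp_iff] at hr hr'
  obtain ⟨π₁, h1, h1γ, h1r⟩ := group_sort_vertical (hγ.mono (by norm_num))
    (F := fun v => (v.1, ⟨r v, hr v⟩)) (fun u v huv => by
      simp only [Prod.mk.injEq, Fin.mk.injEq] at huv
      exact hr' u v huv.2 (Or.inl huv.1)) (fun _ => rfl)
  have h1r' : ∀ v, ((π₁ v).2 : ℕ) = r v := fun v => by rw [h1r]
  obtain ⟨π₂, h2, -, h2c⟩ := group_sort (hδ.mono (by norm_num))
    (F := fun v => ((π (π₁⁻¹ v)).1, v.2)) (fun u v huv => by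
      obtain ⟨u, rfl⟩ := π₁.surjective u
      obtain ⟨v, rfl⟩ := π₁.surjective v
      simp only [Prod.mk.injEq, perm_inv_apply] at huv
      rw [hr' u v (by rw [← h1r', ← h1r', huv.2]) (Or.inr huv.1)]) (fun _ => rfl)
  have h2c' : ∀ v, (π₂ (π₁ v)).1 = (π v).1 := fun v => by rw [h2c]; simp
  obtain ⟨π₃, h3, h3γ, h3r⟩ := group_sort_vertical (hγ.mono (by norm_num))
    (F := fun v => π ((π₂ * π₁)⁻¹ v)) (π.injective.comp (π₂ * π₁)⁻¹.injective) (fun v => by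
      obtain ⟨u, rfl⟩ := (π₂ * π₁).surjective v
      rw [perm_inv_apply, Equiv.Perm.mul_apply, h2c'])
  have h3r' : ∀ v, (π₃ (π₂ (π₁ v))).2 = (π v).2 := fun v => by rw [h3r]; simp
  obtain ⟨π₄, h4, h4'⟩ := strips_sort hγ (by omega)
    (F := fun v => π ((π₃ * (π₂ * π₁))⁻¹ v)) (π.injective.comp (π₃ * (π₂ * π₁))⁻¹.injective)
    (fun v => by
      obtain ⟨u, rfl⟩ := (π₃ * (π₂ * π₁)).surjective v
      rw [perm_inv_apply]
      exact (h3r' u).symm)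
    (fun v => by
      obtain ⟨u, rfl⟩ := (π₃ * (π₂ * π₁)).surjective v
      rw [perm_inv_apply, Equiv.Perm.mul_apply, h3γ, Equiv.Perm.mul_apply, h2c'])
  have : π = π₄ * (π₃ * (π₂ * π₁)) := by
    ext1 v
    rw [Equiv.Perm.mul_apply, h4', perm_inv_apply]
  rw [this]
  exact h4.mul (h3.mul (h2.mul h1))

/-- MAPF on 2D grids under maximum agent density, upper bound: on an `m1 × m2`
grid (`m1 ≥ m2 ≥ 3`) fully occupied by `m1 m2` agents at the start and at the
goal, a feasible path set with makespan at most `4 m1 + 8 m2` exists. -/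
theorem mapf_full_density_upper_bound
    (m1 m2 : ℕ) (h21 : m2 ≤ m1) (h2 : 3 ≤ m2)
    (s g : Fin (m1 * m2) → Fin m1 × Fin m2)
    (hs : Function.Bijective s) (hg : Function.Bijective g) :
    ∃ P : Fin (m1 * m2) → ℕ → Fin m1 × Fin m2,
      FeasiblePathSet s g P ∧ MakespanLE g P (4 * m1 + 8 * m2) := by
  let π : Equiv.Perm (Fin m1 × Fin m2) := (Equiv.ofBijective s hs).symm.trans (.ofBijective g hg)
  have hπ : ∀ i, π (s i) = g i := fun i =>
    congrArg g ((Equiv.ofBijective s hs).symm_apply_apply i)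
  have h : Reach GridAdj Set.univ (4 * m1 + 8 * m2) π := by
    by_cases h6 : m2 ≤ 6
    · exact (route_narrow h21 h2 h6 π).mono (by omega)
    · exact (route_wide h21 (by omega) π).mono (by omega)
  exact exists_paths hs.injective h hπ
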